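/- arXiv:2103.06207 — 3 statements merged into one kernel-verified Lean document; each statement's English description precedes it below -/
import Mathlib

section
/- For every s ∈ ℝ^N with s ≥ 0 entrywise and every t ∈ [0,1], |Σ_i s_i m_i(1,h) − Σ_i s_i m_i(t, w(t))| ≤ (‖s‖_∞/ĥ) · (‖J_1‖_1 + log(1 + ‖J_1‖_1/ĥ)). -/
/-!
Write `S(t) = ∑ sᵢ mᵢ(t, w(t))`. With `κ₂` and `κ₃` the second and third joint cumulants of the
spins (`cov` and `cum`) and vertex `0` in the role of vertex 1, differentiating along the curve
gives
`dmᵢ/dt = ∑ⱼ J₀ⱼ (⟨σᵢσ₀σⱼ⟩ - mᵢ⟨σ₀σⱼ⟩ - mⱼ κ₂(i,0)) = ∑ⱼ J₀ⱼ (κ₃(i,0,j) + m₀ κ₂(i,j))`.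
The second Griffiths inequality (`gks`) applied to the first form bounds this below by
`-∑ⱼ J₀ⱼ mⱼ κ₂(i,0)`; the Griffiths-Hurst-Sherman inequality `κ₃ ≤ 0` (`ghs`) applied to the second
form bounds it above by `∑ⱼ J₀ⱼ m₀ κ₂(i,j)`.

Both sides are controlled by `∑ᵢ gᵢ κ₂(i,j) ≤ mⱼ ≤ 1` (`sum_field_mul_cov_le_mag`), which says that
`mⱼ` is concave along the ray `r ↦ r g` and is again a consequence of GHS. As every field on the curve
is at least `ĥ` (`field_ge`), it follows that `∑ᵢ sᵢ κ₂(i,j) ≤ ‖s‖_∞ / ĥ`, hence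
`|S'| ≤ (‖s‖_∞ / ĥ) ‖J₁‖₁`. The mean value inequality on `[t, 1]` then yields the claim, even without
the (nonnegative) logarithmic term.

The correlation inequalities are proved by replicas, following Ginibre for two copies and
Ellis-Monroe-Newman for four: an orthogonal change of variables among independent copies keeps
the interaction ferromagnetic, and in the new variables every single-site moment is nonnegative, so
after expanding the exponential every monomial has a nonnegative expectation (`repAvg_nonneg`).
-/

namespace IsingGHS

/-- The spin value in `{-1, 1}` encoded by a boolean. -/
def sgn (b : Bool) : ℝ := if b then 1 else -1

/-! ### A cone of functions with nonnegative sum -/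

/-- The monomials in a finite family `A` of functions on a single-site space `X`. -/
def powMonoid {X ι : Type*} [Fintype ι] (A : ι → X → ℝ) : Submonoid (X → ℝ) where
  carrier := {f | ∃ e : ι → ℕ, f = fun x => ∏ a, A a x ^ e a}
  one_mem' := ⟨0, by ext x; simp⟩
  mul_mem' := by
    rintro _ _ ⟨e, rfl⟩ ⟨e', rfl⟩
    exact ⟨e + e', by ext x; simp [pow_add, Finset.prod_mul_distrib]⟩

theorem mem_powMonoid {X ι : Type*} [Fintype ι] [DecidableEq ι] (A : ι → X → ℝ) (a : ι) :
    A a ∈ powMonoid A := by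
  refine ⟨Pi.single a 1, ?_⟩
  ext x
  rw [Finset.prod_eq_single a] <;> simp +contextual

/-- The functions on configurations `Fin N → X` of the form `c ∏ᵢ φᵢ(xᵢ)` with `c ≥ 0` and each `φᵢ`
in the single-site monoid `T`. -/
def monomials (N : ℕ) {X : Type*} (T : Submonoid (X → ℝ)) : Submonoid ((Fin N → X) → ℝ) where
  carrier := {F | ∃ c : ℝ, 0 ≤ c ∧ ∃ φ : Fin N → X → ℝ, (∀ i, φ i ∈ T) ∧
    F = fun x => c * ∏ i, φ i (x i)}
  one_mem' := ⟨1, zero_le_one, fun _ => 1, fun _ => T.one_mem, by ext x; simp⟩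
  mul_mem' := by
    rintro _ _ ⟨c, hc, φ, hφ, rfl⟩ ⟨c', hc', φ', hφ', rfl⟩
    refine ⟨c * c', mul_nonneg hc hc', φ * φ', fun i => T.mul_mem (hφ i) (hφ' i), ?_⟩
    ext x
    simp only [Pi.mul_apply, Finset.prod_mul_distrib]
    ring

/-- The finite sums of elements of `monomials N T`: the polynomials with nonnegative coefficients in
the single-site functions of `T`. -/
def cone (N : ℕ) {X : Type*} (T : Submonoid (X → ℝ)) : Subsemiring ((Fin N → X) → ℝ) :=
  (monomials N T).subsemiringClosure

/-- Sums of product functions factor over the sites, so nonnegativity of the single-site sums passes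
to the whole cone. -/
theorem cone_sum_nonneg {N : ℕ} {X : Type*} [Fintype X] {T : Submonoid (X → ℝ)}
    (hT : ∀ f ∈ T, 0 ≤ ∑ x, f x) {F : (Fin N → X) → ℝ} (hF : F ∈ cone N T) :
    0 ≤ ∑ x, F x := by
  classical
  rw [cone, Submonoid.subsemiringClosure_mem] at hF
  induction hF using AddSubmonoid.closure_induction with
  | mem F hF =>
    obtain ⟨c, hc, φ, hφ, rfl⟩ := hF
    rw [← Finset.mul_sum, ← Fintype.prod_sum]
    exact mul_nonneg hc (Finset.prod_nonneg fun i _ => hT _ (hφ i))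
  | zero => simp
  | add F G _ _ hF hG =>
    simp only [Pi.add_apply, Finset.sum_add_distrib]
    exact add_nonneg hF hG

theorem mem_cone_of_monomial {N : ℕ} {X : Type*} {T : Submonoid (X → ℝ)}
    {F : (Fin N → X) → ℝ} (hF : F ∈ monomials N T) : F ∈ cone N T := by
  rw [cone, Submonoid.subsemiringClosure_mem]
  exact AddSubmonoid.subset_closure hF

theorem const_mem_cone {N : ℕ} {X : Type*} {T : Submonoid (X → ℝ)} {c : ℝ} (hc : 0 ≤ c) :
    (fun _ => c) ∈ cone N T :=
  mem_cone_of_monomial ⟨c, hc, fun _ => 1, fun _ => T.one_mem, by ext x; simp⟩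

theorem site_mem_cone {N : ℕ} {X : Type*} {T : Submonoid (X → ℝ)} {f : X → ℝ} (hf : f ∈ T)
    (i : Fin N) : (fun x => f (x i)) ∈ cone N T := by
  refine mem_cone_of_monomial ⟨1, zero_le_one, Pi.mulSingle i f, fun j => ?_, ?_⟩
  · by_cases h : j = i
    · subst h; simpa using hf
    · simp [Pi.mulSingle_eq_of_ne h]
  · ext x
    rw [Finset.prod_eq_single i]
    · simp
    · intro j _ h
      simp [Pi.mulSingle_eq_of_ne h]
    · simp

theorem sum_mem_cone {N : ℕ} {X ι : Type*} {T : Submonoid (X → ℝ)} (s : Finset ι)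
    {F : ι → (Fin N → X) → ℝ} (hF : ∀ i ∈ s, F i ∈ cone N T) :
    (fun x => ∑ i ∈ s, F i x) ∈ cone N T := by
  have := sum_mem (S := cone N T) hF
  convert this using 1
  ext x
  simp

/-- The nonnegativity survives a Boltzmann weight whose exponent lies in the cone: the partial
sums of the exponential series stay in the cone. -/
theorem cone_exp_nonneg {N : ℕ} {X : Type*} [Fintype X] {T : Submonoid (X → ℝ)}
    (hT : ∀ f ∈ T, 0 ≤ ∑ x, f x) {F G : (Fin N → X) → ℝ} (hF : F ∈ cone N T)
    (hG : G ∈ cone N T) : 0 ≤ ∑ x, G x * Real.exp (F x) := by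
  have hlim : Filter.Tendsto
      (fun n : ℕ => ∑ x, G x * ∑ k ∈ Finset.range n, F x ^ k / (k.factorial : ℝ))
      Filter.atTop (nhds (∑ x, G x * Real.exp (F x))) := by
    refine tendsto_finsetSum _ fun x _ => Filter.Tendsto.const_mul _ ?_
    have := (NormedSpace.expSeries_div_hasSum_exp (𝔸 := ℝ) (F x)).tendsto_sum_nat
    rwa [← Real.exp_eq_exp_ℝ] at this
  refine ge_of_tendsto' hlim fun n => cone_sum_nonneg hT ?_
  refine (cone N T).mul_mem hG (sum_mem_cone _ fun k _ => ?_)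
  have : (fun x => F x ^ k / (k.factorial : ℝ)) = F ^ k * fun _ => ((k.factorial : ℝ))⁻¹ := by
    ext x; simp [div_eq_mul_inv]
  rw [this]
  exact (cone N T).mul_mem (pow_mem hF k) (const_mem_cone (by positivity))

/-! ### Gibbs averages -/

/-- The negative Hamiltonian `∑ᵢⱼ Kᵢⱼ σᵢ σⱼ + ∑ᵢ gᵢ σᵢ`, the exponent of the Gibbs weight. The sum is over
ordered pairs, and diagonal terms, which only shift the energy by a constant, are allowed. -/
noncomputable def energy {N : ℕ} (K : Fin N → Fin N → ℝ) (g : Fin N → ℝ)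
    (σ : Fin N → Bool) : ℝ :=
  (∑ i, ∑ j, K i j * (sgn (σ i) * sgn (σ j))) + ∑ i, g i * sgn (σ i)

/-- The average of `f` under the Gibbs measure proportional to `exp (E σ)`. -/
noncomputable def avg {N : ℕ} (E f : (Fin N → Bool) → ℝ) : ℝ :=
  (∑ σ, f σ * Real.exp (E σ)) / ∑ σ, Real.exp (E σ)

theorem Z_pos {N : ℕ} (E : (Fin N → Bool) → ℝ) : 0 < ∑ σ, Real.exp (E σ) :=
  Finset.sum_pos (fun _ _ => Real.exp_pos _) Finset.univ_nonempty

theorem avg_one {N : ℕ} (E : (Fin N → Bool) → ℝ) : avg E (fun _ => 1) = 1 := by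
  simp [avg, (Z_pos E).ne']

theorem avg_sum {N : ℕ} {ι : Type*} (s : Finset ι) (E : (Fin N → Bool) → ℝ)
    (f : ι → (Fin N → Bool) → ℝ) :
    avg E (fun σ => ∑ i ∈ s, f i σ) = ∑ i ∈ s, avg E (f i) := by
  simp only [avg, Finset.sum_mul]
  rw [Finset.sum_comm, Finset.sum_div]

theorem avg_const_mul {N : ℕ} (E f : (Fin N → Bool) → ℝ) (c : ℝ) :
    avg E (fun σ => c * f σ) = c * avg E f := by
  simp only [avg, mul_assoc, ← Finset.mul_sum, mul_div_assoc]

theorem avg_add {N : ℕ} (E f f' : (Fin N → Bool) → ℝ) :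
    avg E (fun σ => f σ + f' σ) = avg E f + avg E f' := by
  simp only [avg, add_mul, Finset.sum_add_distrib, add_div]

/-- The derivative of a Gibbs average in a parameter is the covariance with the derivative of the
exponent. -/
theorem hasDerivAt_avg {N : ℕ} {E : ℝ → (Fin N → Bool) → ℝ} {E' : (Fin N → Bool) → ℝ} {t : ℝ}
    (hE : ∀ σ, HasDerivAt (fun r => E r σ) (E' σ) t) (f : (Fin N → Bool) → ℝ) :
    HasDerivAt (fun r => avg (E r) f)
      (avg (E t) (fun σ => f σ * E' σ) - avg (E t) f * avg (E t) E') t := by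
  have h1 : HasDerivAt (fun r => ∑ σ, f σ * Real.exp (E r σ))
      (∑ σ, f σ * (Real.exp (E t σ) * E' σ)) t :=
    HasDerivAt.fun_sum fun σ _ => ((hE σ).exp).const_mul _
  have h2 : HasDerivAt (fun r => ∑ σ, Real.exp (E r σ))
      (∑ σ, (Real.exp (E t σ) * E' σ)) t :=
    HasDerivAt.fun_sum fun σ _ => (hE σ).exp
  have h3 := h1.fun_div h2 (Z_pos _).ne'
  refine h3.congr_deriv ?_
  have hZ := (Z_pos (E t)).ne'
  have e1 : ∑ σ, f σ * (Real.exp (E t σ) * E' σ) = ∑ σ, f σ * E' σ * Real.exp (E t σ) :=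
    Finset.sum_congr rfl fun _ _ => by ring
  have e2 : ∑ σ, (Real.exp (E t σ) * E' σ) = ∑ σ, E' σ * Real.exp (E t σ) :=
    Finset.sum_congr rfl fun _ _ => by ring
  rw [e1, e2]
  simp only [avg]
  field_simp

/-! ### Replicas -/

/-- The average of `G` over `k` independent copies of the Gibbs measure. The copies are grouped by
site: `x i r` is the spin at site `i` of copy `r`. -/
noncomputable def repAvg {N : ℕ} (k : ℕ) (E : (Fin N → Bool) → ℝ)
    (G : (Fin N → Fin k → Bool) → ℝ) : ℝ :=
  (∑ x, G x * Real.exp (∑ ρ, E fun i => x i ρ)) / (∑ σ, Real.exp (E σ)) ^ k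

theorem repAvg_prod {N k : ℕ} (E : (Fin N → Bool) → ℝ) (F : Fin k → (Fin N → Bool) → ℝ) :
    repAvg k E (fun x => ∏ ρ, F ρ fun i => x i ρ) = ∏ ρ, avg E (F ρ) := by
  have : ∑ x : Fin N → Fin k → Bool,
      (∏ ρ, F ρ fun i => x i ρ) * Real.exp (∑ ρ, E fun i => x i ρ) =
      ∏ ρ, ∑ σ, F ρ σ * Real.exp (E σ) := by
    rw [Fintype.prod_sum]
    refine Fintype.sum_equiv (Equiv.piComm fun _ _ => Bool) _ _ fun x => ?_
    rw [Real.exp_sum, ← Finset.prod_mul_distrib]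
    rfl
  simp only [repAvg, avg, this, Finset.prod_div_distrib, Finset.prod_const, Finset.card_univ,
    Fintype.card_fin]

theorem repAvg_sum {N k : ℕ} {ι : Type*} (s : Finset ι) (E : (Fin N → Bool) → ℝ)
    (G : ι → (Fin N → Fin k → Bool) → ℝ) :
    repAvg k E (fun x => ∑ i ∈ s, G i x) = ∑ i ∈ s, repAvg k E (G i) := by
  simp only [repAvg, Finset.sum_mul]
  rw [Finset.sum_comm, Finset.sum_div]

theorem repAvg_const_mul {N k : ℕ} (E : (Fin N → Bool) → ℝ) (G : (Fin N → Fin k → Bool) → ℝ)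
    (c : ℝ) : repAvg k E (fun x => c * G x) = c * repAvg k E G := by
  simp only [repAvg, mul_assoc, ← Finset.mul_sum, mul_div_assoc]

/-- The replicated average of a product of three linear combinations over copies, expanded by
independence into products of Gibbs averages. -/
theorem repAvg_three {N k : ℕ} (E f₁ f₂ f₃ : (Fin N → Bool) → ℝ) (b c d : Fin k → ℝ) :
    repAvg k E (fun x => (∑ r, b r * f₁ fun i => x i r) * (∑ r, c r * f₂ fun i => x i r) *
      (∑ r, d r * f₃ fun i => x i r)) =
    ∑ r, ∑ s, ∑ t, (b r * c s * d t) * ∏ ρ, avg E (fun σ =>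
      (if r = ρ then f₁ σ else 1) * (if s = ρ then f₂ σ else 1) * (if t = ρ then f₃ σ else 1)) := by
  simp only [← repAvg_prod, ← repAvg_const_mul, ← repAvg_sum]
  congr 1
  ext x
  rw [Finset.sum_mul_sum, Finset.sum_mul]
  refine Finset.sum_congr rfl fun r _ => ?_
  rw [Finset.sum_mul]
  refine Finset.sum_congr rfl fun s _ => ?_
  rw [Finset.mul_sum]
  refine Finset.sum_congr rfl fun t _ => ?_
  simp only [Finset.prod_mul_distrib, Finset.prod_ite_eq, Finset.mem_univ, if_true]
  ring

/-- The single-site variable `∑ᵣ M a r σʳ`, a linear combination of the spins of the `k` copies. -/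
noncomputable def comb {k : ℕ} (M : Fin k → Fin k → ℝ) (a : Fin k) (x : Fin k → Bool) : ℝ :=
  ∑ r, M a r * sgn (x r)

/-- Ginibre's positivity principle. If `M / √k` is orthogonal, its first row is constant and all
single-site moments of the variables `comb M a` are nonnegative, then every polynomial with
nonnegative coefficients in these variables has nonnegative replicated average, because the total
energy of the copies is itself such a polynomial. -/
theorem repAvg_nonneg {N k : ℕ} [NeZero k] (M : Fin k → Fin k → ℝ)
    (hmom : ∀ e : Fin k → ℕ, 0 ≤ ∑ x, ∏ a, comb M a x ^ e a)
    (horth : ∀ r s, ∑ a, M a r * M a s = if r = s then (k : ℝ) else 0)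
    (hone : ∀ r, M 0 r = 1)
    {K : Fin N → Fin N → ℝ} (hK : ∀ i j, 0 ≤ K i j) {g : Fin N → ℝ} (hg : ∀ i, 0 ≤ g i)
    {G : (Fin N → Fin k → Bool) → ℝ} (hG : G ∈ cone N (powMonoid (comb M))) :
    0 ≤ repAvg k (energy K g) G := by
  refine div_nonneg (cone_exp_nonneg ?_ ?_ hG) (pow_nonneg (Z_pos _).le _)
  · rintro f ⟨e, rfl⟩
    exact hmom e
  have hk : (k : ℝ) ≠ 0 := NeZero.ne _
  -- Orthogonality of `M / √k` preserves the quadratic form.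
  have hquad : ∀ y z : Fin k → Bool,
      ∑ ρ, sgn (y ρ) * sgn (z ρ) = ∑ a, (k : ℝ)⁻¹ * (comb M a y * comb M a z) := by
    intro y z
    have : ∀ r, ∑ a, ∑ s, M a r * sgn (y r) * (M a s * sgn (z s)) =
        k * (sgn (y r) * sgn (z r)) := by
      intro r
      rw [Finset.sum_comm]
      have : ∀ s, ∑ a, M a r * sgn (y r) * (M a s * sgn (z s)) =
          (∑ a, M a r * M a s) * (sgn (y r) * sgn (z s)) := by
        intro s
        rw [Finset.sum_mul]
        exact Finset.sum_congr rfl fun _ _ => by ring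
      simp [this, horth]
    rw [← Finset.mul_sum, eq_inv_mul_iff_mul_eq₀ hk, Finset.mul_sum]
    simp only [comb, Finset.sum_mul_sum]
    rw [Finset.sum_comm]
    exact Finset.sum_congr rfl fun r _ => (this r).symm
  have hlin : ∀ y : Fin k → Bool, ∑ ρ, sgn (y ρ) = comb M 0 y := by
    intro y; simp [comb, hone]
  have hE : (fun x : Fin N → Fin k → Bool => ∑ ρ, energy K g fun i => x i ρ) =
      (fun x => ∑ i, ∑ j, K i j * ∑ a, (k : ℝ)⁻¹ * (comb M a (x i) * comb M a (x j))) +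
        fun x => ∑ i, g i * comb M 0 (x i) := by
    ext x
    simp only [energy, Finset.sum_add_distrib, Pi.add_apply, ← hquad, ← hlin, Finset.mul_sum]
    congr 1
    · rw [Finset.sum_comm]
      exact Finset.sum_congr rfl fun i _ => Finset.sum_comm
    · rw [Finset.sum_comm]
  rw [hE]
  have hs : ∀ a i, (fun x : Fin N → Fin k → Bool => comb M a (x i)) ∈
      cone N (powMonoid (comb M)) := fun a i => site_mem_cone (mem_powMonoid _ a) i
  have hkn : (0 : ℝ) ≤ (k : ℝ)⁻¹ := by positivity
  refine add_mem (sum_mem_cone _ fun i _ => sum_mem_cone _ fun j _ => ?_)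
    (sum_mem_cone _ fun i _ => ?_)
  · exact mul_mem (const_mem_cone (hK i j)) (sum_mem_cone _ fun a _ =>
      mul_mem (const_mem_cone hkn) (mul_mem (hs a i) (hs a j)))
  · exact mul_mem (const_mem_cone (hg i)) (hs 0 i)

/-! ### The two changes of variables -/

theorem sum_bool_fin_succ {n : ℕ} (f : (Fin (n + 1) → Bool) → ℝ) :
    ∑ x, f x = (∑ x, f (Fin.cons true x)) + ∑ x, f (Fin.cons false x) := by
  rw [← (Fin.consEquiv fun _ => Bool).sum_comp, Fintype.sum_prod_type, Fintype.sum_bool]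
  rfl

/-- Ginibre's two-copy variables `σ + σ'` and `σ - σ'`. -/
def M₂ : Fin 2 → Fin 2 → ℝ := ![![1, 1], ![1, -1]]

/-- The four-copy variables of Ellis, Monroe and Newman. The sign of the last row is chosen so that the
product of the four variables is nonnegative at every spin configuration. -/
def M₄ : Fin 4 → Fin 4 → ℝ :=
  ![![1, 1, 1, 1], ![1, 1, -1, -1], ![1, -1, 1, -1], ![-1, 1, 1, -1]]

theorem M₂_moments (e : Fin 2 → ℕ) : 0 ≤ ∑ x, ∏ a, comb M₂ a x ^ e a := by
  simp only [sum_bool_fin_succ, Fin.prod_univ_two, comb, Fin.sum_univ_two, M₂, sgn]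
  norm_num [neg_pow (2 : ℝ)]
  -- The powers of `-1` carry the signs; all other powers enter as nonnegative unknowns.
  have p (n : ℕ) : (0 : ℝ) ≤ 0 ^ n := pow_nonneg le_rfl n
  have q (n : ℕ) : (0 : ℝ) ≤ 2 ^ n := by positivity
  have := p (e 0); have := p (e 1); have := q (e 0); have := q (e 1)
  generalize (0 : ℝ) ^ e 0 = a₀ at *
  generalize (0 : ℝ) ^ e 1 = a₁ at *
  generalize (2 : ℝ) ^ e 0 = b₀ at *
  generalize (2 : ℝ) ^ e 1 = b₁ at *
  rcases neg_one_pow_eq_or ℝ (e 0) with h₀ | h₀ <;>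
  rcases neg_one_pow_eq_or ℝ (e 1) with h₁ | h₁ <;>
  rw [h₀, h₁] <;> ring_nf <;> positivity

theorem sum_bool_four (F : Bool → Bool → Bool → Bool → ℝ) :
    ∑ x : Fin 4 → Bool, F (x 0) (x 1) (x 2) (x 3) = ∑ a, ∑ b, ∑ c, ∑ d, F a b c d := by
  simp only [sum_bool_fin_succ, Fintype.sum_bool, Fintype.sum_unique]
  rfl

theorem M₄_moments (e : Fin 4 → ℕ) : 0 ≤ ∑ x, ∏ a, comb M₄ a x ^ e a := by
  have h₀ (x) : comb M₄ 0 x = sgn (x 0) + sgn (x 1) + sgn (x 2) + sgn (x 3) := by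
    simp [comb, M₄, Fin.sum_univ_four]
  have h₁ (x) : comb M₄ 1 x = sgn (x 0) + sgn (x 1) - sgn (x 2) - sgn (x 3) := by
    simp [comb, M₄, Fin.sum_univ_four]; ring
  have h₂ (x) : comb M₄ 2 x = sgn (x 0) - sgn (x 1) + sgn (x 2) - sgn (x 3) := by
    simp [comb, M₄, Fin.sum_univ_four]; ring
  have h₃ (x) : comb M₄ 3 x = -sgn (x 0) + sgn (x 1) + sgn (x 2) - sgn (x 3) := by
    simp [comb, M₄, Fin.sum_univ_four]; ring
  simp only [Fin.prod_univ_four, h₀, h₁, h₂, h₃]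
  rw [sum_bool_four fun p q r s => (sgn p + sgn q + sgn r + sgn s) ^ e 0 *
    (sgn p + sgn q - sgn r - sgn s) ^ e 1 * (sgn p - sgn q + sgn r - sgn s) ^ e 2 *
    (-sgn p + sgn q + sgn r - sgn s) ^ e 3]
  clear h₀ h₁ h₂ h₃
  norm_num [sgn, neg_pow (2 : ℝ), neg_pow (4 : ℝ)]
  have p (n : ℕ) : (0 : ℝ) ≤ 0 ^ n := pow_nonneg le_rfl n
  have q (n : ℕ) : (0 : ℝ) ≤ 2 ^ n := by positivity
  have r (n : ℕ) : (0 : ℝ) ≤ 4 ^ n := by positivity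
  have := p (e 0); have := p (e 1); have := p (e 2); have := p (e 3)
  have := q (e 0); have := q (e 1); have := q (e 2); have := q (e 3)
  have := r (e 0); have := r (e 1); have := r (e 2); have := r (e 3)
  generalize (0 : ℝ) ^ e 0 = a₀ at *
  generalize (0 : ℝ) ^ e 1 = a₁ at *
  generalize (0 : ℝ) ^ e 2 = a₂ at *
  generalize (0 : ℝ) ^ e 3 = a₃ at *
  generalize (2 : ℝ) ^ e 0 = b₀ at *
  generalize (2 : ℝ) ^ e 1 = b₁ at *
  generalize (2 : ℝ) ^ e 2 = b₂ at *
  generalize (2 : ℝ) ^ e 3 = b₃ at *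
  generalize (4 : ℝ) ^ e 0 = c₀ at *
  generalize (4 : ℝ) ^ e 1 = c₁ at *
  generalize (4 : ℝ) ^ e 2 = c₂ at *
  generalize (4 : ℝ) ^ e 3 = c₃ at *
  rcases neg_one_pow_eq_or ℝ (e 0) with h₀ | h₀ <;>
  rcases neg_one_pow_eq_or ℝ (e 1) with h₁ | h₁ <;>
  rcases neg_one_pow_eq_or ℝ (e 2) with h₂ | h₂ <;>
  rcases neg_one_pow_eq_or ℝ (e 3) with h₃ | h₃ <;>
  rw [h₀, h₁, h₂, h₃] <;> ring_nf <;> positivity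


/-! ### Correlation inequalities -/

theorem repAvg_nonneg_two {N : ℕ} {K : Fin N → Fin N → ℝ} (hK : ∀ i j, 0 ≤ K i j)
    {g : Fin N → ℝ} (hg : ∀ i, 0 ≤ g i) {G : (Fin N → Fin 2 → Bool) → ℝ}
    (hG : G ∈ cone N (powMonoid (comb M₂))) : 0 ≤ repAvg 2 (energy K g) G := by
  refine repAvg_nonneg M₂ M₂_moments (fun r s => ?_) (fun r => ?_) hK hg hG
  · fin_cases r <;> fin_cases s <;> norm_num [M₂, Fin.sum_univ_two]
  · fin_cases r <;> norm_num [M₂]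

theorem repAvg_nonneg_four {N : ℕ} {K : Fin N → Fin N → ℝ} (hK : ∀ i j, 0 ≤ K i j)
    {g : Fin N → ℝ} (hg : ∀ i, 0 ≤ g i) {G : (Fin N → Fin 4 → Bool) → ℝ}
    (hG : G ∈ cone N (powMonoid (comb M₄))) : 0 ≤ repAvg 4 (energy K g) G := by
  refine repAvg_nonneg M₄ M₄_moments (fun r s => ?_) (fun r => ?_) hK hg hG
  · fin_cases r <;> fin_cases s <;> simp [M₄, Fin.sum_univ_four] <;> norm_num
  · fin_cases r <;> simp [M₄]

/-- The magnetization `⟨σᵢ⟩`. -/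
noncomputable def mag {N : ℕ} (E : (Fin N → Bool) → ℝ) (i : Fin N) : ℝ :=
  avg E fun σ => sgn (σ i)

/-- The truncated two-point function `⟨σᵢσⱼ⟩ - ⟨σᵢ⟩⟨σⱼ⟩`. -/
noncomputable def cov {N : ℕ} (E : (Fin N → Bool) → ℝ) (i j : Fin N) : ℝ :=
  avg E (fun σ => sgn (σ i) * sgn (σ j)) - mag E i * mag E j

/-- The third joint cumulant of `σᵢ, σⱼ, σₖ` (the third Ursell function). -/
noncomputable def cum {N : ℕ} (E : (Fin N → Bool) → ℝ) (i j k : Fin N) : ℝ :=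
  avg E (fun σ => sgn (σ i) * sgn (σ j) * sgn (σ k))
    - mag E i * avg E (fun σ => sgn (σ j) * sgn (σ k))
    - mag E j * avg E (fun σ => sgn (σ i) * sgn (σ k))
    - mag E k * avg E (fun σ => sgn (σ i) * sgn (σ j))
    + 2 * (mag E i * mag E j * mag E k)

/-- First Griffiths inequality, for one spin. -/
theorem mag_nonneg {N : ℕ} {K : Fin N → Fin N → ℝ} (hK : ∀ i j, 0 ≤ K i j)
    {g : Fin N → ℝ} (hg : ∀ i, 0 ≤ g i) (i : Fin N) : 0 ≤ mag (energy K g) i := by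
  have h := repAvg_nonneg_two hK hg (site_mem_cone (mem_powMonoid (comb M₂) 0) i)
  have e := repAvg_three (energy K g) (fun σ => sgn (σ i)) (fun _ => 1) (fun _ => 1)
    (M₂ 0) ![1, 0] ![1, 0]
  simp [Fin.sum_univ_two, Fin.prod_univ_two, M₂, avg_one] at e
  simp only [comb, Fin.sum_univ_two, M₂] at h
  simp at h
  rw [e] at h
  simp only [mag]
  linarith

/-- Second Griffiths inequality for two spins: the replicated average of `(σᵢ - σᵢ')(σⱼ - σⱼ')` is twice
the covariance. -/
theorem cov_nonneg {N : ℕ} {K : Fin N → Fin N → ℝ} (hK : ∀ i j, 0 ≤ K i j)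
    {g : Fin N → ℝ} (hg : ∀ i, 0 ≤ g i) (i j : Fin N) : 0 ≤ cov (energy K g) i j := by
  have hv := fun i : Fin N => site_mem_cone (mem_powMonoid (comb M₂) 1) i
  have h := repAvg_nonneg_two hK hg (mul_mem (hv i) (hv j))
  have e := repAvg_three (energy K g) (fun σ => sgn (σ i)) (fun σ => sgn (σ j)) (fun _ => 1)
    (M₂ 1) (M₂ 1) ![1, 0]
  simp [Fin.sum_univ_two, Fin.prod_univ_two, M₂, avg_one] at e
  simp only [comb, Fin.sum_univ_two, M₂, Pi.mul_def] at h
  simp at h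
  rw [e] at h
  simp only [cov, mag]
  linarith

/-- Second Griffiths inequality for a spin and a pair of spins. -/
theorem gks {N : ℕ} {K : Fin N → Fin N → ℝ} (hK : ∀ i j, 0 ≤ K i j)
    {g : Fin N → ℝ} (hg : ∀ i, 0 ≤ g i) (i j k : Fin N) :
    0 ≤ avg (energy K g) (fun σ => sgn (σ i) * (sgn (σ j) * sgn (σ k))) -
      mag (energy K g) i * avg (energy K g) (fun σ => sgn (σ j) * sgn (σ k)) := by
  have hu := fun i : Fin N => site_mem_cone (mem_powMonoid (comb M₂) 0) i
  have hv := fun i : Fin N => site_mem_cone (mem_powMonoid (comb M₂) 1) i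
  -- With `u = σ + σ'` and `v = σ - σ'`, `(vⱼ uₖ + uⱼ vₖ) / 2 = σⱼσₖ - σⱼ'σₖ'`.
  have h := repAvg_nonneg_two hK hg (mul_mem (const_mem_cone (c := 1 / 2) (by norm_num))
    (mul_mem (hv i) (add_mem (mul_mem (hv j) (hu k)) (mul_mem (hu j) (hv k)))))
  have e := repAvg_three (energy K g) (fun σ => sgn (σ i)) (fun σ => sgn (σ j) * sgn (σ k))
    (fun _ => 1) (M₂ 1) (M₂ 1) ![1, 0]
  have : ((fun _ => 1 / 2) * ((fun x : Fin N → Fin 2 → Bool => comb M₂ 1 (x i)) *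
      ((fun x => comb M₂ 1 (x j)) * (fun x => comb M₂ 0 (x k)) +
        (fun x => comb M₂ 0 (x j)) * (fun x => comb M₂ 1 (x k))))) =
      fun x : Fin N → Fin 2 → Bool => (∑ r, M₂ 1 r * sgn (x i r)) *
        (∑ r, M₂ 1 r * (sgn (x j r) * sgn (x k r))) * (∑ r, ![1, 0] r * 1) := by
    ext x
    simp [comb, Fin.sum_univ_two, M₂]
    ring
  rw [this, e] at h
  simp [Fin.sum_univ_two, Fin.prod_univ_two, M₂, avg_one] at h
  simp only [mag]
  linarith

/-- The Griffiths-Hurst-Sherman inequality: the replicated average of the product of the last three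
variables of `M₄` is a negative multiple of the third cumulant. -/
theorem ghs {N : ℕ} {K : Fin N → Fin N → ℝ} (hK : ∀ i j, 0 ≤ K i j)
    {g : Fin N → ℝ} (hg : ∀ i, 0 ≤ g i) (i j k : Fin N) : cum (energy K g) i j k ≤ 0 := by
  have hs := fun (a : Fin 4) (i : Fin N) => site_mem_cone (mem_powMonoid (comb M₄) a) i
  have h := repAvg_nonneg_four hK hg (mul_mem (mul_mem (hs 1 i) (hs 2 j)) (hs 3 k))
  have e := repAvg_three (energy K g) (fun σ => sgn (σ i)) (fun σ => sgn (σ j))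
    (fun σ => sgn (σ k)) (M₄ 1) (M₄ 2) (M₄ 3)
  have h' := h.trans_eq e
  simp [Fin.sum_univ_four, Fin.prod_univ_four, M₄, avg_one] at h'
  simp only [cum, mag]
  linarith


/-! ### Concavity of the magnetization along rays -/

theorem hasDerivAt_mag {N : ℕ} {E : ℝ → (Fin N → Bool) → ℝ} {g : Fin N → ℝ} {t : ℝ}
    (hE : ∀ σ, HasDerivAt (fun r => E r σ) (∑ i, g i * sgn (σ i)) t) (j : Fin N) :
    HasDerivAt (fun r => mag (E r) j) (∑ i, g i * cov (E t) i j) t := by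
  refine (hasDerivAt_avg hE _).congr_deriv ?_
  have h1 : (fun σ : Fin N → Bool => sgn (σ j) * ∑ i, g i * sgn (σ i)) =
      fun σ => ∑ i, g i * (sgn (σ i) * sgn (σ j)) := by
    ext σ
    rw [Finset.mul_sum]
    exact Finset.sum_congr rfl fun _ _ => by ring
  rw [h1, avg_sum, avg_sum, Finset.mul_sum, ← Finset.sum_sub_distrib]
  refine Finset.sum_congr rfl fun i _ => ?_
  rw [avg_const_mul, avg_const_mul]
  simp only [cov, mag]
  ring

theorem hasDerivAt_cov {N : ℕ} {E : ℝ → (Fin N → Bool) → ℝ} {g : Fin N → ℝ} {t : ℝ}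
    (hE : ∀ σ, HasDerivAt (fun r => E r σ) (∑ i, g i * sgn (σ i)) t) (j k : Fin N) :
    HasDerivAt (fun r => cov (E r) j k) (∑ i, g i * cum (E t) i j k) t := by
  refine ((hasDerivAt_avg hE fun σ => sgn (σ j) * sgn (σ k)).sub
    ((hasDerivAt_mag hE j).mul (hasDerivAt_mag hE k))).congr_deriv ?_
  have h1 : (fun σ : Fin N → Bool => sgn (σ j) * sgn (σ k) * ∑ i, g i * sgn (σ i)) =
      fun σ => ∑ i, g i * (sgn (σ i) * sgn (σ j) * sgn (σ k)) := by
    ext σ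
    rw [Finset.mul_sum]
    exact Finset.sum_congr rfl fun _ _ => by ring
  rw [h1, avg_sum, avg_sum, Finset.mul_sum, Finset.mul_sum, Finset.sum_mul,
    ← Finset.sum_add_distrib, ← Finset.sum_sub_distrib, ← Finset.sum_sub_distrib]
  refine Finset.sum_congr rfl fun i _ => ?_
  rw [avg_const_mul, avg_const_mul]
  simp only [cov, cum, mag]
  ring

/-- The left side is the derivative of `r ↦ mⱼ(r g)` at `r = 1`; GHS makes this derivative antitone and
`mⱼ(0) ≥ 0`, so the mean value theorem on `[0, 1]` applies. -/
theorem sum_field_mul_cov_le_mag {N : ℕ} {K : Fin N → Fin N → ℝ} (hK : ∀ i j, 0 ≤ K i j)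
    {g : Fin N → ℝ} (hg : ∀ i, 0 ≤ g i) (j : Fin N) :
    ∑ i, g i * cov (energy K g) i j ≤ mag (energy K g) j := by
  set E : ℝ → (Fin N → Bool) → ℝ := fun r => energy K fun i => r * g i with hEdef
  have hE (t : ℝ) (σ : Fin N → Bool) :
      HasDerivAt (fun r => E r σ) (∑ i, g i * sgn (σ i)) t := by
    refine (HasDerivAt.fun_sum fun i _ => ?_).const_add _
    simpa using ((hasDerivAt_id t).mul_const (g i)).mul_const (sgn (σ i))
  have hE1 : E 1 = energy K g := by simp [hEdef]
  have hrg (r : ℝ) (hr : 0 ≤ r) (i : Fin N) : 0 ≤ r * g i := mul_nonneg hr (hg i)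
  have hd (r : ℝ) := hasDerivAt_mag (hE r) j
  have hd2 (r : ℝ) : HasDerivAt (fun r => ∑ i, g i * cov (E r) i j)
      (∑ i, g i * ∑ l, g l * cum (E r) l i j) r :=
    HasDerivAt.fun_sum fun i _ => (hasDerivAt_cov (hE r) i j).const_mul _
  have hanti : AntitoneOn (fun r => ∑ i, g i * cov (E r) i j) (Set.Ici 0) := by
    refine antitoneOn_of_hasDerivWithinAt_nonpos (convex_Ici 0)
      (fun r _ => (hd2 r).continuousAt.continuousWithinAt)
      (fun r _ => (hd2 r).hasDerivWithinAt) fun r hr => ?_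
    rw [interior_Ici] at hr
    exact Finset.sum_nonpos fun i _ => mul_nonpos_of_nonneg_of_nonpos (hg i)
      (Finset.sum_nonpos fun l _ => mul_nonpos_of_nonneg_of_nonpos (hg l)
        (ghs hK (hrg r (le_of_lt hr)) l i j))
  obtain ⟨ξ, hξ, hslope⟩ := exists_hasDerivAt_eq_slope (fun r => mag (E r) j)
    (fun r => ∑ i, g i * cov (E r) i j) zero_lt_one
    (fun r _ => (hd r).continuousAt.continuousWithinAt) fun r _ => hd r
  have h0 : 0 ≤ mag (E 0) j := mag_nonneg hK (hrg 0 le_rfl) j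
  have h1 := hanti (Set.mem_Ici.2 hξ.1.le) (Set.mem_Ici.2 zero_le_one) hξ.2.le
  simp only [sub_zero, div_one] at hslope h1
  rw [← hE1]
  linarith

theorem mag_le_one {N : ℕ} (E : (Fin N → Bool) → ℝ) (i : Fin N) : mag E i ≤ 1 := by
  refine div_le_one_of_le₀ (Finset.sum_le_sum fun σ _ => ?_) (Z_pos E).le
  refine mul_le_of_le_one_left (Real.exp_pos _).le ?_
  show sgn (σ i) ≤ 1
  cases σ i <;> norm_num [sgn]

theorem weighted_cov_le {N : ℕ} {K : Fin N → Fin N → ℝ} (hK : ∀ i j, 0 ≤ K i j)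
    {g s : Fin N → ℝ} {a S : ℝ} (ha : 0 < a) (hg : ∀ i, a ≤ g i) (hsS : ∀ i, s i ≤ S)
    (hS : 0 ≤ S) (j : Fin N) :
    ∑ i, s i * cov (energy K g) i j ≤ S / a := by
  have hg0 : ∀ i, 0 ≤ g i := fun i => ha.le.trans (hg i)
  calc ∑ i, s i * cov (energy K g) i j ≤ ∑ i, S / a * (g i * cov (energy K g) i j) := by
        refine Finset.sum_le_sum fun i _ => ?_
        rw [← mul_assoc]
        refine mul_le_mul_of_nonneg_right ?_ (cov_nonneg hK hg0 i j)
        calc s i ≤ S / a * a := by rw [div_mul_cancel₀ _ ha.ne']; exact hsS i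
          _ ≤ S / a * g i := mul_le_mul_of_nonneg_left (hg i) (by positivity)
    _ = S / a * ∑ i, g i * cov (energy K g) i j := by rw [Finset.mul_sum]
    _ ≤ S / a * 1 := mul_le_mul_of_nonneg_left
        ((sum_field_mul_cov_le_mag hK hg0 j).trans (mag_le_one _ j)) (by positivity)
    _ = S / a := mul_one _

/-! ### The derivative along the characteristic curve -/

/-- The derivative of the exponent along the characteristic curve, with `v` the couplings to
vertex `0`: the coupling term `σ₀ ∑ⱼ vⱼ σⱼ` plus the field term `w₀' σ₀`, where
`w₀' = -∑ⱼ vⱼ mⱼ`. -/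
noncomputable def drift {N : ℕ} [NeZero N] (E : (Fin N → Bool) → ℝ) (v : Fin N → ℝ)
    (σ : Fin N → Bool) : ℝ :=
  sgn (σ 0) * (∑ j, v j * sgn (σ j)) - (∑ j, v j * mag E j) * sgn (σ 0)

theorem drift_eq {N : ℕ} [NeZero N] (E : (Fin N → Bool) → ℝ) (v : Fin N → ℝ) (i : Fin N) :
    avg E (fun σ => sgn (σ i) * drift E v σ) - mag E i * avg E (drift E v) =
    ∑ j, v j * (avg E (fun σ => sgn (σ i) * (sgn (σ 0) * sgn (σ j))) -
      mag E i * avg E (fun σ => sgn (σ 0) * sgn (σ j)) - mag E j * cov E i 0) := by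
  have h1 : (fun σ => sgn (σ i) * drift E v σ) = fun σ => ∑ j,
      (v j * (sgn (σ i) * (sgn (σ 0) * sgn (σ j))) +
        -(v j * mag E j) * (sgn (σ i) * sgn (σ 0))) := by
    ext σ
    rw [drift, mul_sub, Finset.mul_sum, Finset.mul_sum, Finset.sum_mul, Finset.mul_sum,
      ← Finset.sum_sub_distrib]
    exact Finset.sum_congr rfl fun _ _ => by ring
  have h2 : drift E v = fun σ => ∑ j,
      (v j * (sgn (σ 0) * sgn (σ j)) + -(v j * mag E j) * sgn (σ 0)) := by
    ext σ
    rw [drift, Finset.mul_sum, Finset.sum_mul, ← Finset.sum_sub_distrib]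
    exact Finset.sum_congr rfl fun _ _ => by ring
  rw [h1, h2, avg_sum, avg_sum, Finset.mul_sum, ← Finset.sum_sub_distrib]
  refine Finset.sum_congr rfl fun j _ => ?_
  rw [avg_add, avg_add, avg_const_mul, avg_const_mul, avg_const_mul, avg_const_mul]
  simp only [cov, mag]
  ring

theorem abs_weighted_drift_le {N : ℕ} [NeZero N] {K : Fin N → Fin N → ℝ}
    (hK : ∀ i j, 0 ≤ K i j) {g s v : Fin N → ℝ} {a S : ℝ} (ha : 0 < a) (hg : ∀ i, a ≤ g i)
    (hs : ∀ i, 0 ≤ s i) (hsS : ∀ i, s i ≤ S) (hS : 0 ≤ S) (hv : ∀ j, 0 ≤ v j) :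
    |∑ i, s i * (avg (energy K g) (fun σ => sgn (σ i) * drift (energy K g) v σ) -
      mag (energy K g) i * avg (energy K g) (drift (energy K g) v))| ≤ S / a * ∑ j, v j := by
  have hg0 : ∀ i, 0 ≤ g i := fun i => ha.le.trans (hg i)
  set E := energy K g with hE
  have hC : 0 ≤ S / a := by positivity
  have hw (j) : ∑ i, s i * cov E i j ≤ S / a := weighted_cov_le hK ha hg hsS hS j
  have hm0 (j) : 0 ≤ mag E j := mag_nonneg hK hg0 j
  have hm1 (j) : mag E j ≤ 1 := mag_le_one E j
  simp only [drift_eq]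
  rw [abs_le]
  constructor
  · calc -(S / a * ∑ j, v j) ≤ ∑ j, v j * (-mag E j * ∑ i, s i * cov E i 0) := by
          rw [Finset.mul_sum, ← Finset.sum_neg_distrib]
          refine Finset.sum_le_sum fun j _ => ?_
          have : mag E j * ∑ i, s i * cov E i 0 ≤ 1 * (S / a) :=
            (mul_le_mul_of_nonneg_left (hw 0) (hm0 j)).trans
              (mul_le_mul_of_nonneg_right (hm1 j) hC)
          have := mul_le_mul_of_nonneg_left this (hv j)
          linarith
      _ = ∑ i, s i * ∑ j, v j * (-(mag E j * cov E i 0)) := by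
          simp only [Finset.mul_sum]
          rw [Finset.sum_comm]
          exact Finset.sum_congr rfl fun i _ => Finset.sum_congr rfl fun j _ => by ring
      _ ≤ _ := by
          refine Finset.sum_le_sum fun i _ => mul_le_mul_of_nonneg_left ?_ (hs i)
          refine Finset.sum_le_sum fun j _ => mul_le_mul_of_nonneg_left ?_ (hv j)
          have := gks hK hg0 i 0 j
          linarith
  · calc _ ≤ ∑ i, s i * ∑ j, v j * (mag E 0 * cov E i j) := by
          refine Finset.sum_le_sum fun i _ => mul_le_mul_of_nonneg_left ?_ (hs i)
          refine Finset.sum_le_sum fun j _ => mul_le_mul_of_nonneg_left ?_ (hv j)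
          have := ghs hK hg0 i 0 j
          simp only [cum, cov, ← hE, mul_assoc] at this ⊢
          linarith
      _ = ∑ j, v j * (mag E 0 * ∑ i, s i * cov E i j) := by
          simp only [Finset.mul_sum]
          rw [Finset.sum_comm]
          exact Finset.sum_congr rfl fun i _ => Finset.sum_congr rfl fun j _ => by ring
      _ ≤ S / a * ∑ j, v j := by
          rw [Finset.mul_sum]
          refine Finset.sum_le_sum fun j _ => ?_
          have : mag E 0 * ∑ i, s i * cov E i j ≤ 1 * (S / a) :=
            (mul_le_mul_of_nonneg_left (hw j) (hm0 0)).trans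
              (mul_le_mul_of_nonneg_right (hm1 0) hC)
          have := mul_le_mul_of_nonneg_left this (hv j)
          linarith

/-! ### The interpolated model -/

/-- The couplings of the interpolated Hamiltonian in the normal form of `energy`: row `0` is scaled by
`t`, the block away from `0` carries the factor `1 / 2`, and column `0` is otherwise empty since each
bond at `0` is counted once. -/
noncomputable def interp {N : ℕ} [NeZero N] (J : Matrix (Fin N) (Fin N) ℝ) (t : ℝ)
    (i j : Fin N) : ℝ :=
  (if i = 0 then t * J 0 j else 0) + if i ≠ 0 ∧ j ≠ 0 then 1 / 2 * J i j else 0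

theorem energy_interp {N : ℕ} [NeZero N] (J : Matrix (Fin N) (Fin N) ℝ) (t : ℝ)
    (g : Fin N → ℝ) (σ : Fin N → Bool) :
    energy (interp J t) g σ = -(-t * sgn (σ 0) * (∑ i, J 0 i * sgn (σ i))
      - (1/2) * (∑ i ∈ Finset.univ.filter (fun i => i ≠ (0 : Fin N)),
          ∑ j ∈ Finset.univ.filter (fun j => j ≠ (0 : Fin N)),
            J i j * sgn (σ i) * sgn (σ j))
      - ∑ i, g i * sgn (σ i)) := by
  have h1 : ∑ i, ∑ j, (if i = 0 then t * J 0 j else 0) * (sgn (σ i) * sgn (σ j)) =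
      t * sgn (σ 0) * ∑ i, J 0 i * sgn (σ i) := by
    rw [Finset.sum_eq_single 0]
    · rw [Finset.mul_sum]
      exact Finset.sum_congr rfl fun _ _ => by rw [if_pos rfl]; ring
    · intro i _ hi
      simp [hi]
    · simp
  have h2 : ∑ i, ∑ j, (if i ≠ 0 ∧ j ≠ 0 then 1 / 2 * J i j else 0) * (sgn (σ i) * sgn (σ j)) =
      (1/2) * (∑ i ∈ Finset.univ.filter (fun i => i ≠ (0 : Fin N)),
          ∑ j ∈ Finset.univ.filter (fun j => j ≠ (0 : Fin N)),
            J i j * sgn (σ i) * sgn (σ j)) := by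
    simp only [Finset.sum_filter, Finset.mul_sum]
    refine Finset.sum_congr rfl fun i _ => ?_
    by_cases hi : i = 0
    · simp [hi]
    · simp only [hi, ne_eq, not_false_eq_true, true_and, if_true, Finset.mul_sum]
      refine Finset.sum_congr rfl fun j _ => ?_
      split_ifs <;> ring
  simp only [energy, interp, add_mul, Finset.sum_add_distrib]
  rw [h1, h2]
  ring

theorem interp_nonneg {N : ℕ} [NeZero N] {J : Matrix (Fin N) (Fin N) ℝ}
    (hJ : ∀ i j, 0 ≤ J i j) {t : ℝ} (ht : 0 ≤ t) (i j : Fin N) : 0 ≤ interp J t i j := by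
  have := hJ 0 j
  have := hJ i j
  rw [interp]
  split_ifs <;> positivity

/-- A solution started backwards from `u 1 = b > 0`, whose slope is nonpositive wherever `u ≥ 0`, stays
above `b` on `[0, 1]`. Comparison with the lines `b - ε (1 - t)`, `ε ≤ b`, avoids the circularity
that the sign of the slope is known only where `u ≥ 0`. -/
theorem field_ge {u d : ℝ → ℝ} {b : ℝ} (hb : 0 < b) (hu1 : u 1 = b)
    (hu : ∀ t ∈ Set.Icc (0 : ℝ) 1, HasDerivAt u (d t) t)
    (hd : ∀ t ∈ Set.Icc (0 : ℝ) 1, 0 ≤ u t → d t ≤ 0) :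
    ∀ t ∈ Set.Icc (0 : ℝ) 1, b ≤ u t := by
  have hmem {r : ℝ} (hr : r ∈ Set.Icc (0 : ℝ) 1) : 1 - r ∈ Set.Icc (0 : ℝ) 1 :=
    ⟨by linarith [hr.2], by linarith [hr.1]⟩
  have hf (r : ℝ) (hr : r ∈ Set.Icc (0 : ℝ) 1) :
      HasDerivAt (fun r => -u (1 - r)) (d (1 - r)) r := by
    exact (((hu _ (hmem hr)).comp r ((hasDerivAt_id r).const_sub 1)).neg).congr_deriv (by simp)
  have key (ε : ℝ) (hε : 0 < ε) (hεb : ε ≤ b) (r : ℝ) (hr : r ∈ Set.Icc (0 : ℝ) 1) :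
      -u (1 - r) ≤ -b + ε * r := by
    refine image_le_of_deriv_right_lt_deriv_boundary (f := fun r => -u (1 - r))
      (f' := fun r => d (1 - r)) (B := fun r => -b + ε * r) (B' := fun _ => ε)
      (fun x hx => (hf x hx).continuousAt.continuousWithinAt)
      (fun x hx => (hf x ⟨hx.1, hx.2.le⟩).hasDerivWithinAt) (by simp [hu1])
      (fun x => by simpa using ((hasDerivAt_id x).const_mul ε).const_add (-b)) ?_ hr
    intro x hx hxe
    refine (hd _ (hmem ⟨hx.1, hx.2.le⟩) ?_).trans_lt hε
    nlinarith [hx.1, hx.2]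
  intro t ht
  refine le_of_forall_pos_le_add fun ε hε => ?_
  have h := key (min ε b) (lt_min hε hb) (min_le_right _ _) (1 - t) (hmem ht)
  rw [sub_sub_cancel] at h
  have : min ε b * (1 - t) ≤ ε * 1 :=
    mul_le_mul (min_le_left _ _) (by linarith [ht.1]) (by linarith [ht.2]) hε.le
  linarith

end IsingGHS

open IsingGHS in
/-- **Lemma 2.2.** Along the approximate characteristic curve `w(t)`, any nonnegatively
weighted average of the magnetizations of the interpolated model satisfies
`|sᵀ m(1,h) - sᵀ m(t,w(t))| ≤ (‖s‖_∞/ĥ)(‖J_1‖_1 + log(1 + ‖J_1‖_1/ĥ))` for `t ∈ [0,1]`. -/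
theorem weighted_average_along_characteristic
    (N : ℕ) [NeZero N]
    (J : Matrix (Fin N) (Fin N) ℝ)
    (hJsym : ∀ i j, J i j = J j i)
    (hJnonneg : ∀ i j, 0 ≤ J i j)
    (h : Fin N → ℝ) (hh : ∀ i, 0 ≤ h i)
    (hhat : ℝ) (hhat_def : hhat = ⨅ i, h i) (hhat_pos : 0 < hhat)
    (spin : Bool → ℝ) (hspin : spin = fun b => if b then 1 else -1)
    (H : ℝ → (Fin N → ℝ) → (Fin N → Bool) → ℝ)
    (hH : ∀ t g σ, H t g σ =
      -t * spin (σ 0) * (∑ i, J 0 i * spin (σ i))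
      - (1/2) * (∑ i ∈ Finset.univ.filter (fun i => i ≠ (0 : Fin N)),
          ∑ j ∈ Finset.univ.filter (fun j => j ≠ (0 : Fin N)),
            J i j * spin (σ i) * spin (σ j))
      - ∑ i, g i * spin (σ i))
    (m : ℝ → (Fin N → ℝ) → Fin N → ℝ)
    (hm : ∀ t g k, m t g k =
      (∑ σ : Fin N → Bool, spin (σ k) * Real.exp (-H t g σ)) /
      (∑ σ : Fin N → Bool, Real.exp (-H t g σ)))
    (w : ℝ → Fin N → ℝ)
    (hw1 : w 1 = h)
    (hwfix : ∀ t ∈ Set.Icc (0:ℝ) 1, ∀ i, i ≠ 0 → w t i = h i)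
    (hwode : ∀ t ∈ Set.Icc (0:ℝ) 1,
      HasDerivAt (fun r => w r 0) (-(∑ i, J 0 i * m t (w t) i)) t)
    (s : Fin N → ℝ) (hs : ∀ i, 0 ≤ s i)
    (t : ℝ) (ht : t ∈ Set.Icc (0:ℝ) 1) :
    |(∑ i, s i * m 1 h i) - ∑ i, s i * m t (w t) i| ≤
      ((⨆ i, |s i|) / hhat) *
        ((∑ i, J 0 i) + Real.log (1 + (∑ i, J 0 i) / hhat)) := by
  obtain rfl : spin = sgn := hspin
  have hJ0 : 0 ≤ ∑ i, J 0 i := Finset.sum_nonneg fun i _ => hJnonneg 0 i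
  have hm' (t g k) : m t g k = mag (energy (interp J t) g) k := by
    rw [hm]
    simp only [mag, avg, energy_interp, ← hH]
  have hhle (i) : hhat ≤ h i := by
    rw [hhat_def]; exact ciInf_le (Set.finite_range h).bddBelow i
  have hsS (i) : s i ≤ ⨆ i, |s i| :=
    (le_abs_self _).trans (le_ciSup (f := fun i => |s i|) (Set.finite_range _).bddAbove i)
  have hS : 0 ≤ ⨆ i, |s i| := (hs 0).trans (hsS 0)
  have hw0 : ∀ r ∈ Set.Icc (0 : ℝ) 1, h 0 ≤ w r 0 := by
    refine field_ge (hhat_pos.trans_le (hhle 0)) (by rw [hw1]) hwode fun r hr hwr => ?_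
    refine neg_nonpos.2 (Finset.sum_nonneg fun i _ => mul_nonneg (hJnonneg 0 i) ?_)
    rw [hm']
    refine mag_nonneg (interp_nonneg hJnonneg hr.1) (fun k => ?_) i
    by_cases hk : k = 0
    · rwa [hk]
    · rw [hwfix r hr k hk]; exact hh k
  have hwge (r) (hr : r ∈ Set.Icc (0 : ℝ) 1) (i) : hhat ≤ w r i := by
    by_cases hi : i = 0
    · rw [hi]; exact (hhle 0).trans (hw0 r hr)
    · rw [hwfix r hr i hi]; exact hhle i
  -- Off `[0, 1]` nothing is known about `w r i` for `i ≠ 0`; `W` freezes these coordinates at `h i`, so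
  -- that it is differentiable at the endpoints too.
  set W : ℝ → Fin N → ℝ := fun r i => if i = 0 then w r 0 else h i with hW
  have hWw (r) (hr : r ∈ Set.Icc (0 : ℝ) 1) : w r = W r := by
    ext i
    by_cases hi : i = 0
    · simp [hW, hi]
    · simp [hW, hi, hwfix r hr i hi]
  have hE (r) (hr : r ∈ Set.Icc (0 : ℝ) 1) (σ : Fin N → Bool) :
      HasDerivAt (fun r => energy (interp J r) (W r) σ)
        (drift (energy (interp J r) (W r)) (J 0) σ) r := by
    simp only [energy_interp]
    have hf : HasDerivAt (fun r => ∑ i, W r i * sgn (σ i))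
        (∑ i, if i = 0 then
          (-∑ j, J 0 j * mag (energy (interp J r) (W r)) j) * sgn (σ i) else 0) r := by
      refine HasDerivAt.fun_sum fun i _ => ?_
      by_cases hi : i = 0
      · have := hwode r hr
        simp only [hm', hWw r hr] at this
        simpa [hW, hi] using this.mul_const (sgn (σ i))
      · simpa [hW, hi] using hasDerivAt_const r (h i * sgn (σ i))
    have hl : HasDerivAt (fun r : ℝ => -r * sgn (σ 0) * ∑ i, J 0 i * sgn (σ i))
        (-1 * sgn (σ 0) * ∑ i, J 0 i * sgn (σ i)) r :=
      ((hasDerivAt_id r).neg.mul_const _).mul_const _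
    refine ((hl.sub_const _).sub hf).neg.congr_deriv ?_
    rw [Finset.sum_ite_eq' Finset.univ (0 : Fin N)]
    simp only [Finset.mem_univ, if_true, drift]
    ring
  set C := (⨆ i, |s i|) / hhat * ∑ i, J 0 i with hC
  have hCnn : 0 ≤ C := by positivity
  have hmain := Convex.norm_image_sub_le_of_norm_hasDerivWithin_le (C := C)
    (f := fun r => ∑ i, s i * mag (energy (interp J r) (W r)) i)
    (fun r hr => (HasDerivAt.fun_sum fun i _ =>
      (hasDerivAt_avg (hE r hr) _).const_mul (s i)).hasDerivWithinAt)
    (fun r hr => abs_weighted_drift_le (interp_nonneg hJnonneg hr.1) hhat_pos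
      (fun i => hWw r hr ▸ hwge r hr i) hs hsS hS (hJnonneg 0))
    (convex_Icc 0 1) ht (Set.right_mem_Icc.2 zero_le_one)
  have hlog : 0 ≤ Real.log (1 + (∑ i, J 0 i) / hhat) :=
    Real.log_nonneg (le_add_of_nonneg_right (by positivity))
  have h1 : h = W 1 := by rw [← hw1]; exact hWw 1 (Set.right_mem_Icc.2 zero_le_one)
  have hL : (∑ i, s i * m 1 h i) - ∑ i, s i * m t (w t) i =
      (∑ i, s i * mag (energy (interp J 1) (W 1)) i) -
        ∑ i, s i * mag (energy (interp J t) (W t)) i := by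
    simp only [hm', hWw t ht, ← h1]
  rw [hL]
  refine hmain.trans ?_
  have ht' : ‖1 - t‖ ≤ 1 := by
    rw [Real.norm_eq_abs, abs_le]; constructor <;> linarith [ht.1, ht.2]
  calc C * ‖1 - t‖ ≤ C * 1 := mul_le_mul_of_nonneg_left ht' hCnn
    _ ≤ _ := by
      rw [mul_one, hC]
      exact mul_le_mul_of_nonneg_left (le_add_of_nonneg_right hlog) (by positivity)
end

section
/- Suppose h ≥ 0 entrywise. Then there exists a continuously differentiable curve w : [0,1] → ℝ^N with w(1) = h, w_i(t) = h_i for all i ≠ 1 and all t ∈ [0,1], and w_1′(t) = −Σ_{i=1}^N J_{1i} m_i(t, w(t)) for all t ∈ [0,1]; moreover any such curve satisfies h_1 ≤ w_1(t) ≤ h_1 + ‖J_1‖_1 for all t ∈ [0,1], and in particular min_i w_i(t) ≥ min_i h_i. -/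
/-!
Only the first coordinate of the curve moves, so the claim concerns the scalar equation
`u' = -F(t, u)`, `u(1) = h_1`, where `F(t, x) = ∑ i, J_{1i} m_i(t, (x, h_2, …, h_N))`.

Existence: since `|m_i| ≤ 1`, `F` is bounded by `‖J_1‖_1`; since `∂m_i/∂x` is the covariance of
`σ_i` and `σ_1` it is bounded by `2`, so `F` is globally Lipschitz in `x`
(`gibbsAvg_lipschitz`). Picard–Lindelöf then gives a solution on a neighbourhood of `[0, 1]`
(`exists_scalar_solution`).

Bounds: `|F| ≤ ‖J_1‖_1` gives `u(t) ≤ h_1 + ‖J_1‖_1`. The lower bound rests on the first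
Griffiths (GKS) inequality, `m_i(t, g) ≥ 0` for `t ≥ 0` and `g ≥ 0`: expanding `e^{-H}` in powers
of `-H`, which is a polynomial in the spins with nonnegative coefficients, every term is a sum of
spin monomials, and such a sum is nonnegative (`sum_mul_exp_nonneg`). This gives `F(t, h_1) ≥ 0`,
but by itself says nothing if `u` drops below `0`; the Lipschitz bound
`F(t, x) ≥ -K |x - h_1|` and a comparison with `ε e^{(K+1)(1-t)}` exclude that
(`lower_bound_of_lipschitz`).
-/

/-! ### Gibbs averages over a finite set -/

/-- The average of `a` under the Gibbs measure with weights `exp (E i)` (so `E` is minus the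
energy). -/
noncomputable def gibbsAvg {ι : Type*} [Fintype ι] (E a : ι → ℝ) : ℝ :=
  (∑ i, a i * Real.exp (E i)) / ∑ i, Real.exp (E i)

lemma partition_pos {ι : Type*} [Fintype ι] [Nonempty ι] (E : ι → ℝ) :
    0 < ∑ i, Real.exp (E i) :=
  Finset.sum_pos (fun _ _ => Real.exp_pos _) Finset.univ_nonempty

lemma abs_gibbsAvg_le {ι : Type*} [Fintype ι] [Nonempty ι] (E a : ι → ℝ)
    (ha : ∀ i, |a i| ≤ 1) : |gibbsAvg E a| ≤ 1 := by
  have hZ := partition_pos E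
  rw [gibbsAvg, abs_div, abs_of_pos hZ, div_le_one hZ]
  refine (Finset.abs_sum_le_sum_abs _ _).trans (Finset.sum_le_sum fun i _ => ?_)
  rw [abs_mul, abs_of_pos (Real.exp_pos _)]
  exact mul_le_of_le_one_left (Real.exp_pos _).le (ha i)

lemma hasDerivAt_gibbsAvg {ι : Type*} [Fintype ι] [Nonempty ι] (c s a : ι → ℝ) (x : ℝ) :
    HasDerivAt (fun x => gibbsAvg (fun i => c i + x * s i) a)
      (gibbsAvg (fun i => c i + x * s i) (fun i => a i * s i) -
        gibbsAvg (fun i => c i + x * s i) a * gibbsAvg (fun i => c i + x * s i) s) x := by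
  have hE : ∀ i, HasDerivAt (fun x => Real.exp (c i + x * s i))
      (Real.exp (c i + x * s i) * s i) x := fun i => by
    have h1 := (((hasDerivAt_id x).mul_const (s i)).const_add (c i)).exp
    simpa using h1
  have hZ := partition_pos (fun i => c i + x * s i)
  have hnum : HasDerivAt (fun x => ∑ i, a i * Real.exp (c i + x * s i))
      (∑ i, a i * (Real.exp (c i + x * s i) * s i)) x :=
    HasDerivAt.fun_sum fun i _ => (hE i).const_mul (a i)
  have hden : HasDerivAt (fun x => ∑ i, Real.exp (c i + x * s i))
      (∑ i, Real.exp (c i + x * s i) * s i) x :=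
    HasDerivAt.fun_sum fun i _ => hE i
  have h2 := hnum.fun_div hden hZ.ne'
  have e1 : ∑ i, a i * (Real.exp (c i + x * s i) * s i)
      = ∑ i, a i * s i * Real.exp (c i + x * s i) := Finset.sum_congr rfl fun i _ => by ring
  have e2 : ∑ i, Real.exp (c i + x * s i) * s i
      = ∑ i, s i * Real.exp (c i + x * s i) := Finset.sum_congr rfl fun i _ => by ring
  rw [e1, e2] at h2
  refine h2.congr_deriv ?_
  unfold gibbsAvg
  generalize ∑ i, Real.exp (c i + x * s i) = Z at hZ ⊢
  rw [div_mul_div_comm, ← sq, sub_div, sq, mul_div_mul_right _ _ hZ.ne']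

/-- The derivative of a Gibbs average in an external field is a covariance, hence at most `2`
when both observables are bounded by `1`. -/
lemma gibbsAvg_lipschitz {ι : Type*} [Fintype ι] [Nonempty ι] (c s a : ι → ℝ)
    (hs : ∀ i, |s i| ≤ 1) (ha : ∀ i, |a i| ≤ 1) (x y : ℝ) :
    |gibbsAvg (fun i => c i + y * s i) a - gibbsAvg (fun i => c i + x * s i) a|
      ≤ 2 * |y - x| := by
  refine Convex.norm_image_sub_le_of_norm_hasDerivWithin_le (s := Set.univ)
    (fun x _ => (hasDerivAt_gibbsAvg c s a x).hasDerivWithinAt) (fun x _ => ?_) convex_univ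
    (Set.mem_univ x) (Set.mem_univ y)
  have h1 := abs_gibbsAvg_le (fun i => c i + x * s i) (fun i => a i * s i) fun i => by
    rw [abs_mul]; exact mul_le_one₀ (ha i) (abs_nonneg _) (hs i)
  have h2 := abs_gibbsAvg_le (fun i => c i + x * s i) a ha
  have h3 := abs_gibbsAvg_le (fun i => c i + x * s i) s hs
  have h4 := mul_le_one₀ h2 (abs_nonneg _) h3
  rw [← abs_mul] at h4
  rw [Real.norm_eq_abs]
  exact (abs_sub _ _).trans (by linarith)

/-! ### The first Griffiths inequality -/

/-- The spin `±1` encoded by a Boolean. -/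
noncomputable def spinVal (b : Bool) : ℝ := if b then 1 else -1

/-- Polynomials in the spins with nonnegative coefficients, as functions on configurations. -/
noncomputable def spinCone (n : ℕ) : Subsemiring ((Fin n → Bool) → ℝ) :=
  Subsemiring.closure
    ({f | ∃ c : ℝ, 0 ≤ c ∧ f = fun _ => c} ∪ {f | ∃ i, f = fun σ => spinVal (σ i)})

lemma const_mem_spinCone {n : ℕ} {c : ℝ} (hc : 0 ≤ c) :
    (fun _ => c : (Fin n → Bool) → ℝ) ∈ spinCone n :=
  Subsemiring.subset_closure (Or.inl ⟨c, hc, rfl⟩)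

lemma spin_mem_spinCone {n : ℕ} (i : Fin n) : (fun σ => spinVal (σ i)) ∈ spinCone n :=
  Subsemiring.subset_closure (Or.inr ⟨i, rfl⟩)

lemma sum_spinVal_pow_nonneg (k : ℕ) : 0 ≤ ∑ b : Bool, spinVal b ^ k := by
  rcases neg_one_pow_eq_or ℝ k with h | h <;> simp [spinVal, h]

/-- A polynomial in the spins with nonnegative coefficients has nonnegative sum over all
configurations: this is true of each monomial because its sum factorizes over the sites. -/
lemma sum_nonneg_of_mem_spinCone {n : ℕ} {f : (Fin n → Bool) → ℝ} (hf : f ∈ spinCone n) :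
    0 ≤ ∑ σ, f σ := by
  rw [spinCone, Subsemiring.mem_closure_iff] at hf
  induction hf using AddSubmonoid.closure_induction with
  | zero => simp
  | add f g _ _ h1 h2 =>
    simp only [Pi.add_apply, Finset.sum_add_distrib]
    exact add_nonneg h1 h2
  | mem f hf =>
    obtain ⟨c, hc, k, rfl⟩ : ∃ c : ℝ, 0 ≤ c ∧ ∃ k : Fin n → ℕ,
        f = fun σ => c * ∏ i, spinVal (σ i) ^ k i := by
      induction hf using Submonoid.closure_induction with
      | one => exact ⟨1, zero_le_one, 0, by ext; simp⟩
      | mul f g _ _ h1 h2 =>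
        obtain ⟨c, hc, k, rfl⟩ := h1
        obtain ⟨d, hd, l, rfl⟩ := h2
        refine ⟨c * d, mul_nonneg hc hd, k + l, ?_⟩
        ext σ
        simp only [Pi.mul_apply, Pi.add_apply, pow_add, Finset.prod_mul_distrib]
        ring
      | mem f hf =>
        rcases hf with ⟨c, hc, rfl⟩ | ⟨i, rfl⟩
        · exact ⟨c, hc, 0, by ext; simp⟩
        · refine ⟨1, zero_le_one, Pi.single i 1, ?_⟩
          ext σ
          rw [Finset.prod_eq_single i] <;> simp +contextual
    rw [← Finset.mul_sum, ← Fintype.prod_sum (fun (i : Fin n) (b : Bool) => spinVal b ^ k i)]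
    exact mul_nonneg hc (Finset.prod_nonneg fun i _ => sum_spinVal_pow_nonneg _)

/-- First Griffiths (GKS) inequality, in unnormalized form. -/
lemma sum_mul_exp_nonneg {n : ℕ} {f E : (Fin n → Bool) → ℝ} (hf : f ∈ spinCone n)
    (hE : E ∈ spinCone n) : 0 ≤ ∑ σ, f σ * Real.exp (E σ) := by
  have key : HasSum (fun k : ℕ => ∑ σ, f σ * (E σ ^ k / (k.factorial : ℝ)))
      (∑ σ, f σ * Real.exp (E σ)) :=
    hasSum_sum fun σ _ => by
      have := NormedSpace.expSeries_div_hasSum_exp (E σ)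
      rw [← Real.exp_eq_exp_ℝ] at this
      exact this.mul_left _
  refine key.nonneg fun k => ?_
  have h1 := sum_nonneg_of_mem_spinCone (mul_mem hf (pow_mem hE k))
  have h2 : ∑ σ, f σ * (E σ ^ k / (k.factorial : ℝ))
      = (∑ σ, (f * E ^ k) σ) / (k.factorial : ℝ) := by
    rw [Finset.sum_div]
    exact Finset.sum_congr rfl fun σ _ => by simp only [Pi.mul_apply, Pi.pow_apply]; ring
  rw [h2]
  exact div_nonneg h1 (Nat.cast_nonneg _)

/-! ### The scalar equation -/

/-- Global solvability on `[0, 1]` of a scalar terminal value problem with a bounded, Lipschitz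
right-hand side. -/
lemma exists_scalar_solution (f : ℝ → ℝ → ℝ) (x₀ : ℝ) (M K : NNReal)
    (hLip : ∀ t, LipschitzWith K (f t)) (hcont : ∀ x, Continuous fun t => f t x)
    (hb : ∀ t x, |f t x| ≤ M) :
    ∃ u : ℝ → ℝ, u 1 = x₀ ∧ ∀ t ∈ Set.Icc (0 : ℝ) 1, HasDerivAt u (f t (u t)) t := by
  -- Solving on the larger interval `[-1, 3]` yields two-sided derivatives at `0` and `1`.
  have hPL : IsPicardLindelof f (⟨1, by norm_num⟩ : Set.Icc (-1 : ℝ) 3) x₀ (M * 2) 0 M K :=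
    { lipschitzOnWith := fun t _ => (hLip t).lipschitzOnWith
      continuousOn := fun x _ => (hcont x).continuousOn
      norm_le := fun t _ x _ => hb t x
      mul_max_le := by norm_num }
  obtain ⟨u, hu1, hu⟩ := hPL.exists_eq_forall_mem_Icc_hasDerivWithinAt₀
  refine ⟨u, hu1, fun t ht => ?_⟩
  exact (hu t ⟨by linarith [ht.1], by linarith [ht.2]⟩).hasDerivAt
    (Icc_mem_nhds (by linarith [ht.1]) (by linarith [ht.2]))

/-- If `F (t, ·)` is nonnegative at the terminal value and Lipschitz there, then backward in time
solutions of `u' = -F(t, u)` stay above their terminal value. -/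
lemma lower_bound_of_lipschitz (F : ℝ → ℝ → ℝ) (x₀ K : ℝ)
    (hLip : ∀ t x, |F t x - F t x₀| ≤ K * |x - x₀|)
    (hpos : ∀ t ∈ Set.Icc (0 : ℝ) 1, 0 ≤ F t x₀) (u : ℝ → ℝ) (hu1 : u 1 = x₀)
    (hu : ∀ t ∈ Set.Icc (0 : ℝ) 1, HasDerivAt u (-F t (u t)) t) :
    ∀ t ∈ Set.Icc (0 : ℝ) 1, x₀ ≤ u t := by
  -- In reversed time `s = 1 - t` the deficit `x₀ - u` stays below `ε e^{(K+1)s}`: wherever the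
  -- two agree, the deficit grows at rate at most `K ε e^{(K+1)s}`.
  have hd : ∀ s ∈ Set.Icc (0 : ℝ) 1,
      HasDerivAt (fun s => x₀ - u (1 - s)) (-F (1 - s) (u (1 - s))) s := fun s hs => by
    have h1 := (hu (1 - s) ⟨by linarith [hs.2], by linarith [hs.1]⟩).comp s
      ((hasDerivAt_id s).const_sub 1)
    simpa using h1.const_sub x₀
  have key : ∀ ε > 0, ∀ s ∈ Set.Icc (0 : ℝ) 1,
      x₀ - u (1 - s) ≤ ε * Real.exp ((K + 1) * s) := by
    intro ε hε
    have hB : ∀ s, HasDerivAt (fun s => ε * Real.exp ((K + 1) * s))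
        (ε * (Real.exp ((K + 1) * s) * (K + 1))) s := fun s => by
      have h1 := (((hasDerivAt_id s).const_mul (K + 1)).exp).const_mul ε
      simpa using h1
    refine image_le_of_deriv_right_lt_deriv_boundary
      (fun s hs => (hd s hs).continuousAt.continuousWithinAt)
      (fun s hs => (hd s (Set.Ico_subset_Icc_self hs)).hasDerivWithinAt)
      (by simp [hu1, hε.le]) hB fun s hs heq => ?_
    have hp : 0 < ε * Real.exp ((K + 1) * s) := mul_pos hε (Real.exp_pos _)
    have h1 := hLip (1 - s) (u (1 - s))
    have h2 := hpos (1 - s) ⟨by linarith [hs.2], by linarith [hs.1]⟩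
    rw [abs_sub_comm (u (1 - s)), heq, abs_of_pos hp] at h1
    have h3 := (abs_le.1 h1).1
    linarith
  intro t ht
  have hs : 1 - t ∈ Set.Icc (0 : ℝ) 1 := ⟨by linarith [ht.2], by linarith [ht.1]⟩
  refine le_of_forall_pos_le_add fun δ hδ => ?_
  have h1 := key (δ / Real.exp ((K + 1) * (1 - t))) (div_pos hδ (Real.exp_pos _)) _ hs
  rw [div_mul_cancel₀ _ (Real.exp_pos _).ne', sub_sub_cancel] at h1
  linarith

/-! ### The characteristic curve -/


/-- **Existence and bounds for the approximate characteristic curve.** For `h ≥ 0` there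
exists a continuously differentiable curve `w : [0,1] → ℝ^N` with `w(1) = h`,
`w_i(t) = h_i` for `i ≠ 1`, and `w_1'(t) = -∑_i J_{1i} m_i(t, w(t))`; moreover any such
curve satisfies `h_1 ≤ w_1(t) ≤ h_1 + ‖J_1‖_1` and hence `min_i w_i(t) ≥ min_i h_i`. -/
theorem characteristic_curve_exists_and_bounds
    (N : ℕ) [NeZero N]
    (J : Matrix (Fin N) (Fin N) ℝ)
    (hJsym : ∀ i j, J i j = J j i)
    (hJnonneg : ∀ i j, 0 ≤ J i j)
    (h : Fin N → ℝ) (hh : ∀ i, 0 ≤ h i)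
    (spin : Bool → ℝ) (hspin : spin = fun b => if b then 1 else -1)
    (H : ℝ → (Fin N → ℝ) → (Fin N → Bool) → ℝ)
    (hH : ∀ t g σ, H t g σ =
      -t * spin (σ 0) * (∑ i, J 0 i * spin (σ i))
      - (1/2) * (∑ i ∈ Finset.univ.filter (fun i => i ≠ (0 : Fin N)),
          ∑ j ∈ Finset.univ.filter (fun j => j ≠ (0 : Fin N)),
            J i j * spin (σ i) * spin (σ j))
      - ∑ i, g i * spin (σ i))
    (m : ℝ → (Fin N → ℝ) → Fin N → ℝ)
    (hm : ∀ t g k, m t g k =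
      (∑ σ : Fin N → Bool, spin (σ k) * Real.exp (-H t g σ)) /
      (∑ σ : Fin N → Bool, Real.exp (-H t g σ))) :
    (∃ w : ℝ → Fin N → ℝ,
      w 1 = h ∧
      (∀ t ∈ Set.Icc (0:ℝ) 1, ∀ i, i ≠ 0 → w t i = h i) ∧
      (∀ t ∈ Set.Icc (0:ℝ) 1,
        HasDerivAt (fun r => w r 0) (-(∑ i, J 0 i * m t (w t) i)) t) ∧
      ContinuousOn (fun t => -(∑ i, J 0 i * m t (w t) i)) (Set.Icc (0:ℝ) 1)) ∧
    (∀ w : ℝ → Fin N → ℝ,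
      w 1 = h →
      (∀ t ∈ Set.Icc (0:ℝ) 1, ∀ i, i ≠ 0 → w t i = h i) →
      (∀ t ∈ Set.Icc (0:ℝ) 1,
        HasDerivAt (fun r => w r 0) (-(∑ i, J 0 i * m t (w t) i)) t) →
      ∀ t ∈ Set.Icc (0:ℝ) 1,
        h 0 ≤ w t 0 ∧ w t 0 ≤ h 0 + ∑ i, J 0 i ∧ (⨅ i, h i) ≤ ⨅ i, w t i) := by
  have hsv : spin = spinVal := by rw [hspin]; rfl
  subst hsv
  clear hspin
  have habs : ∀ b, |spinVal b| ≤ 1 := by intro b; cases b <;> simp [spinVal]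
  have hmg : ∀ t g k, m t g k = gibbsAvg (fun σ => -H t g σ) (fun σ => spinVal (σ k)) := hm
  have hm1 : ∀ t g k, |m t g k| ≤ 1 := fun t g k => by
    rw [hmg]; exact abs_gibbsAvg_le _ _ fun σ => habs _
  have hm0 : ∀ t g k, 0 ≤ t → (∀ i, 0 ≤ g i) → 0 ≤ m t g k := by
    intro t g k ht hg
    rw [hmg]
    refine div_nonneg (sum_mul_exp_nonneg (spin_mem_spinCone k) ?_) (partition_pos _).le
    have e : (fun σ => -H t g σ) =
        (fun _ => t) * (fun σ => spinVal (σ 0)) * (∑ i, (fun _ => J 0 i) * fun σ => spinVal (σ i))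
        + (fun _ => 1 / 2) * (∑ i ∈ Finset.univ.filter (fun i => i ≠ (0 : Fin N)),
          ∑ j ∈ Finset.univ.filter (fun j => j ≠ (0 : Fin N)),
            (fun _ => J i j) * (fun σ => spinVal (σ i)) * (fun σ => spinVal (σ j)))
        + ∑ i, (fun _ => g i) * fun σ => spinVal (σ i) := by
      ext σ
      rw [hH]
      simp only [Pi.add_apply, Pi.mul_apply, Finset.sum_apply]
      ring
    rw [e]
    refine add_mem (add_mem (mul_mem (mul_mem (const_mem_spinCone ht) (spin_mem_spinCone 0)) ?_)
      (mul_mem (const_mem_spinCone (by norm_num)) ?_)) ?_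
    · exact sum_mem fun i _ => mul_mem (const_mem_spinCone (hJnonneg _ _)) (spin_mem_spinCone _)
    · exact sum_mem fun i _ => sum_mem fun j _ =>
        mul_mem (mul_mem (const_mem_spinCone (hJnonneg _ _)) (spin_mem_spinCone _))
          (spin_mem_spinCone _)
    · exact sum_mem fun i _ => mul_mem (const_mem_spinCone (hg i)) (spin_mem_spinCone _)
  -- The field in the first coordinate enters `-H` only through the term `x σ₁`.
  have hHx : ∀ t x σ, -H t (Function.update h 0 x) σ
      = -H t (Function.update h 0 0) σ + x * spinVal (σ 0) := by
    intro t x σ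
    have e : ∀ x : ℝ, ∑ i, Function.update h 0 x i * spinVal (σ i)
        = x * spinVal (σ 0) + ∑ i ∈ Finset.univ.erase 0, h i * spinVal (σ i) := fun x => by
      rw [← Finset.add_sum_erase _ _ (Finset.mem_univ (0 : Fin N)), Function.update_self]
      congr 1
      refine Finset.sum_congr rfl fun i hi => ?_
      rw [Function.update_of_ne (Finset.ne_of_mem_erase hi)]
    rw [hH, hH, e, e]
    ring
  have hmLip : ∀ t x y k, |m t (Function.update h 0 y) k - m t (Function.update h 0 x) k|
      ≤ 2 * |y - x| := by
    intro t x y k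
    simp only [hmg, hHx t x, hHx t y]
    exact gibbsAvg_lipschitz _ _ _ (fun σ => habs _) (fun σ => habs _) x y
  have hmcont : ∀ k, Continuous fun p : ℝ × ℝ => m p.1 (Function.update h 0 p.2) k := by
    intro k
    have hHc : ∀ σ, Continuous fun p : ℝ × ℝ => -H p.1 (Function.update h 0 p.2) σ := by
      intro σ
      simp only [hH]
      fun_prop
    simp only [hm]
    refine Continuous.div (by fun_prop) (by fun_prop) fun p => (partition_pos _).ne'
  set M : ℝ := ∑ i, J 0 i with hM
  have hM0 : 0 ≤ M := Finset.sum_nonneg fun i _ => hJnonneg 0 i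
  set F : ℝ → ℝ → ℝ := fun t x => ∑ i, J 0 i * m t (Function.update h 0 x) i with hF
  have hFb : ∀ t x, |F t x| ≤ M := fun t x => by
    refine (Finset.abs_sum_le_sum_abs _ _).trans (Finset.sum_le_sum fun i _ => ?_)
    rw [abs_mul, abs_of_nonneg (hJnonneg 0 i)]
    exact mul_le_of_le_one_right (hJnonneg 0 i) (hm1 _ _ _)
  have hFLip : ∀ t x y, |F t y - F t x| ≤ 2 * M * |y - x| := fun t x y => by
    have e : F t y - F t x = ∑ i, J 0 i *
        (m t (Function.update h 0 y) i - m t (Function.update h 0 x) i) := by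
      simp only [hF, ← Finset.sum_sub_distrib, mul_sub]
    have e2 : 2 * M * |y - x| = ∑ i, J 0 i * (2 * |y - x|) := by
      rw [← Finset.sum_mul]; ring
    rw [e, e2]
    refine (Finset.abs_sum_le_sum_abs _ _).trans (Finset.sum_le_sum fun i _ => ?_)
    rw [abs_mul, abs_of_nonneg (hJnonneg 0 i)]
    exact mul_le_mul_of_nonneg_left (hmLip _ _ _ _) (hJnonneg 0 i)
  have hFcont : Continuous fun p : ℝ × ℝ => F p.1 p.2 :=
    continuous_finsetSum _ fun i _ => continuous_const.mul (hmcont i)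
  constructor
  · obtain ⟨u, hu1, hu⟩ := exists_scalar_solution (fun t x => -F t x) (h 0) ⟨M, hM0⟩
      ⟨2 * M, by positivity⟩
      (fun t => LipschitzWith.of_dist_le_mul fun x y => by
        rw [dist_neg_neg]; exact hFLip t y x)
      (fun x => (hFcont.comp (by fun_prop : Continuous fun t : ℝ => (t, x))).neg)
      (fun t x => by rw [abs_neg]; exact hFb t x)
    refine ⟨fun t => Function.update h 0 (u t), by simp [hu1],
      fun t _ i hi => Function.update_of_ne hi _ _, fun t ht => ?_, ?_⟩
    · simpa using hu t ht
    · have huc : ContinuousOn u (Set.Icc 0 1) := fun t ht =>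
        (hu t ht).continuousAt.continuousWithinAt
      exact (hFcont.comp_continuousOn (continuousOn_id.prodMk huc)).neg
  · intro w hw1 hwi hw
    have hwu : ∀ t ∈ Set.Icc (0 : ℝ) 1, w t = Function.update h 0 (w t 0) := by
      intro t ht
      ext i
      by_cases hi : i = 0
      · subst hi; simp
      · rw [Function.update_of_ne hi, hwi t ht i hi]
    have hu : ∀ t ∈ Set.Icc (0 : ℝ) 1, HasDerivAt (fun r => w r 0) (-F t (w t 0)) t := by
      intro t ht
      have h1 := hw t ht
      rw [hwu t ht] at h1
      exact h1
    have hlow : ∀ t ∈ Set.Icc (0 : ℝ) 1, h 0 ≤ w t 0 :=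
      lower_bound_of_lipschitz F (h 0) (2 * M) (fun t x => hFLip t (h 0) x)
        (fun t ht => Finset.sum_nonneg fun i _ => mul_nonneg (hJnonneg 0 i)
          (hm0 _ _ _ ht.1 (by simpa using hh)))
        (fun r => w r 0) (by rw [hw1]) hu
    intro t ht
    refine ⟨hlow t ht, ?_, ?_⟩
    · have h1 := Convex.norm_image_sub_le_of_norm_hasDerivWithin_le (C := M)
        (fun r hr => (hu r hr).hasDerivWithinAt)
        (fun r hr => by rw [norm_neg]; exact hFb _ _) (convex_Icc (0 : ℝ) 1)
        (Set.right_mem_Icc.2 zero_le_one) ht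
      simp only [hw1, Real.norm_eq_abs] at h1
      have h2 : |t - 1| ≤ 1 := abs_le.2 ⟨by linarith [ht.1], by linarith [ht.2]⟩
      have h3 := mul_le_of_le_one_right hM0 h2
      linarith [le_abs_self (w t 0 - h 0)]
    · refine ciInf_mono (Set.finite_range h).bddBelow fun i => ?_
      by_cases hi : i = 0
      · subst hi; exact hlow t ht
      · exact (hwi t ht i hi).ge
end

section
/- |m_1(1,h) − tanh(w_1(0))| ≤ 3‖J_1‖_∞ / ĥ. -/
/-!
Write `s` for the spin at the distinguished site and `D = ∑ i, J₀ᵢ σᵢ`. Along the curve `t ↦ w t`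
the magnetization `M t = ⟨s⟩` satisfies `M' = -⟨s⟩ · Cov(s, D)`: the derivative of the field
cancels the mean-field part of the derivative of the coupling, because `s² = 1`. At `t = 0` the
distinguished spin is decoupled, so `M 0 = tanh (w 0 0)`, while `M 1` is the magnetization to be
estimated. It therefore suffices to bound `|M'|` by `‖J₀‖_∞ / ĥ`, which even gives the constant `1`
in place of `3`.

The distinguished field `w · 0` stays above `h 0` (`magnetization_curve_bound`): its derivative is
nonpositive wherever the field is nonnegative, by the first Griffiths inequality. As all fields
`gᵢ` are then at least `ĥ`, the second Griffiths inequality yields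
`0 ≤ Cov(s, D) ≤ (‖J₀‖_∞ / ĥ) Cov(s, ∑ i, gᵢ σᵢ)`. The last covariance is `φ' 1`, where `φ r` is the
expectation of `s` in the field `r g`. The Griffiths-Hurst-Sherman inequality makes `φ` concave,
so `φ' 1 ≤ φ 1 - φ 0 ≤ 1` (`gibbs_cov_field_le`).

The three correlation inequalities come from one positivity statement (`replica_nonneg`), in the
manner of Ellis and Monroe. Take four independent copies of the spin system and apply an orthogonal
rotation to the four spins at each site. The total energy is a polynomial with nonnegative
coefficients in the rotated spins, and every monomial in the rotated spins at one site has a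
nonnegative sum over the sixteen spin values, so expanding the exponential shows that every
polynomial with nonnegative coefficients has nonnegative Gibbs weight. Means, covariances and
(minus) third cumulants are the expectations of products of one, two and three rotated spins.
-/

open Finset

/-! ### Rotated spins and their single-site moments -/

/-- The real spin value `±1` encoded by a Boolean. -/
def sp (b : Bool) : ℝ := if b then 1 else -1

lemma sp_le_one (b : Bool) : sp b ≤ 1 := by cases b <;> norm_num [sp]

lemma sp_sq (b : Bool) : sp b * sp b = 1 := by cases b <;> simp [sp]

/-- The `4 × 4` matrix mixing the replicas: twice an orthogonal matrix. Its rows other than the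
first sum to zero, and the sign of the last row makes the product of four rotated spins
nonnegative. -/
def rot : Fin 4 → Fin 4 → ℝ :=
  ![![1, 1, 1, 1], ![1, 1, -1, -1], ![1, -1, 1, -1], ![-1, 1, 1, -1]]

/-- The `u`-th rotated spin at a site where the four replicas have spins `q`. -/
def rotSpin (u : Fin 4) (q : Fin 4 → Bool) : ℝ := ∑ a, rot u a * sp (q a)

lemma sum_rotSpin_mul (q r : Fin 4 → Bool) :
    ∑ u, rotSpin u q * rotSpin u r = 4 * ∑ a, sp (q a) * sp (r a) := by
  simp [rotSpin, Fin.sum_univ_four, rot]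
  ring

/-- Monomials in the rotated spins have nonnegative sum. The symmetries that change the sign of two
of the rotated spins make the sum vanish unless all exponents have the same parity; in that case
every term is nonnegative, since the product of the four rotated spins is. The proof evaluates the
sixteen terms for each parity pattern. -/
lemma site_moment_nonneg (n : Fin 4 → ℕ) :
    0 ≤ ∑ q : Fin 4 → Bool, ∏ u, rotSpin u q ^ n u := by
  have huniv : (univ : Finset (Fin 4 → Bool)) =
      (univ : Finset (Bool × Bool × Bool × Bool)).image
        (fun p => ![p.1, p.2.1, p.2.2.1, p.2.2.2]) := by decide
  have hinj : Function.Injective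
      (fun p : Bool × Bool × Bool × Bool => ![p.1, p.2.1, p.2.2.1, p.2.2.2]) := by decide
  rw [huniv, sum_image hinj.injOn]
  simp only [Fintype.sum_prod_type, Fintype.sum_bool, rotSpin, rot, sp, Fin.sum_univ_four,
    Fin.prod_univ_four]
  simp
  norm_num
  rcases Nat.even_or_odd (n 0) with h0 | h0 <;> rcases Nat.even_or_odd (n 1) with h1 | h1 <;>
  rcases Nat.even_or_odd (n 2) with h2 | h2 <;> rcases Nat.even_or_odd (n 3) with h3 | h3 <;>
  simp only [h0.neg_pow, h1.neg_pow, h2.neg_pow, h3.neg_pow] <;> ring_nf <;> positivity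

/-! ### Nonnegative polynomials in the rotated spins -/

section Cone
variable {ι : Type*}

/-- Polynomials with nonnegative coefficients in the rotated spins at all sites, as functions on
the configurations of the replicated system (site first, then replica). -/
def cone (ι : Type*) : Subsemiring ((ι → Fin 4 → Bool) → ℝ) :=
  Subsemiring.closure ({f | ∃ c : ℝ, 0 ≤ c ∧ f = fun _ => c} ∪
    {f | ∃ i u, f = fun τ => rotSpin u (τ i)})

lemma const_mem_cone {c : ℝ} (hc : 0 ≤ c) : (fun _ => c) ∈ cone ι :=
  Subsemiring.subset_closure (Or.inl ⟨c, hc, rfl⟩)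

lemma rotSpin_mem_cone (i : ι) (u : Fin 4) : (fun τ => rotSpin u (τ i)) ∈ cone ι :=
  Subsemiring.subset_closure (Or.inr ⟨i, u, rfl⟩)

variable [Fintype ι] [DecidableEq ι]

lemma sum_cone_nonneg {f : (ι → Fin 4 → Bool) → ℝ} (hf : f ∈ cone ι) : 0 ≤ ∑ τ, f τ := by
  rw [cone, ← Subsemiring.closure_submonoid_closure, Subsemiring.mem_closure_iff,
    Submonoid.closure_eq] at hf
  induction hf using AddSubmonoid.closure_induction with
  | zero => simp
  | add f g _ _ hf hg => simpa [sum_add_distrib] using add_nonneg hf hg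
  | mem f hf =>
    -- A product of generators is a nonnegative multiple of a monomial, whose sum factors over sites.
    have key : ∃ c : ℝ, 0 ≤ c ∧ ∃ n : ι → Fin 4 → ℕ,
        f = fun τ => c * ∏ i, ∏ u, rotSpin u (τ i) ^ n i u := by
      induction hf using Submonoid.closure_induction with
      | one => exact ⟨1, zero_le_one, 0, by ext; simp⟩
      | mul f g _ _ hf hg =>
        obtain ⟨c, hc, n, rfl⟩ := hf
        obtain ⟨d, hd, k, rfl⟩ := hg
        refine ⟨c * d, mul_nonneg hc hd, n + k, ?_⟩
        ext τ
        simp only [Pi.mul_apply, Pi.add_apply, pow_add, prod_mul_distrib]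
        ring
      | mem f hf =>
        rcases hf with ⟨c, hc, rfl⟩ | ⟨i, u, rfl⟩
        · exact ⟨c, hc, 0, by ext; simp⟩
        · refine ⟨1, zero_le_one, fun j v => if j = i then (if v = u then 1 else 0) else 0, ?_⟩
          ext τ
          rw [one_mul, prod_eq_single i (by intro j _ hj; simp [hj]) (by simp),
            prod_eq_single u (by intro v _ hv; simp [hv]) (by simp)]
          simp
    obtain ⟨c, hc, n, rfl⟩ := key
    rw [← mul_sum]
    refine mul_nonneg hc ?_
    have := prod_univ_sum (fun _ : ι => (univ : Finset (Fin 4 → Bool)))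
      (fun i q => ∏ u, rotSpin u q ^ n i u)
    rw [Fintype.piFinset_univ] at this
    rw [← this]
    exact prod_nonneg fun i _ => site_moment_nonneg _

lemma sum_cone_exp_nonneg {f g : (ι → Fin 4 → Bool) → ℝ} (hf : f ∈ cone ι) (hg : g ∈ cone ι) :
    0 ≤ ∑ τ, f τ * Real.exp (g τ) := by
  -- The partial sums of the exponential series stay in the cone.
  have hlim : Filter.Tendsto
      (fun n : ℕ => ∑ τ, f τ * ∑ k ∈ range n, g τ ^ k / (k.factorial : ℝ)) Filter.atTop
      (nhds (∑ τ, f τ * Real.exp (g τ))) := by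
    refine tendsto_finsetSum _ fun τ _ => Filter.Tendsto.const_mul _ ?_
    have := (NormedSpace.expSeries_div_hasSum_exp (g τ)).tendsto_sum_nat
    rwa [← Real.exp_eq_exp_ℝ] at this
  refine ge_of_tendsto' hlim fun n => sum_cone_nonneg
    (f := fun τ => f τ * ∑ k ∈ range n, g τ ^ k / (k.factorial : ℝ)) ?_
  have : (fun τ => f τ * ∑ k ∈ range n, g τ ^ k / (k.factorial : ℝ)) =
      f * ∑ k ∈ range n, g ^ k * (fun _ => ((k.factorial : ℝ))⁻¹) := by
    ext τ; simp [div_eq_mul_inv]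
  rw [this]
  exact mul_mem hf (sum_mem fun k _ => mul_mem (pow_mem hg k) (const_mem_cone (by positivity)))

end Cone

/-! ### Expectations over four replicas -/

section Replica

/-- A replica sum of a product of three linear combinations, expanded over the choice of replica in
each factor; each term factors over the replicas. -/
lemma replica_sum {Ω : Type*} [Fintype Ω] (p q r : Fin 4 → ℝ) (X Y V W : Ω → ℝ) :
    ∑ τ : Fin 4 → Ω, (∑ a, p a * X (τ a)) * (∑ a, q a * Y (τ a)) * (∑ a, r a * V (τ a)) *
      ∏ a, W (τ a) =
    ∑ a, ∑ b, ∑ c, p a * q b * r c * ∏ e, ∑ σ, (if e = a then X σ else 1) *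
      (if e = b then Y σ else 1) * (if e = c then V σ else 1) * W σ := by
  classical
  have key : ∀ a b c : Fin 4, ∏ e, ∑ σ, (if e = a then X σ else 1) *
      (if e = b then Y σ else 1) * (if e = c then V σ else 1) * W σ =
      ∑ τ : Fin 4 → Ω, X (τ a) * Y (τ b) * V (τ c) * ∏ e, W (τ e) := by
    intro a b c
    rw [prod_univ_sum, Fintype.piFinset_univ]
    refine sum_congr rfl fun τ _ => ?_
    simp only [prod_mul_distrib, prod_ite_eq', mem_univ, if_true]
  simp_rw [key, mul_assoc, sum_mul]
  rw [sum_comm]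
  refine sum_congr rfl fun a _ => ?_
  simp_rw [mul_sum]
  rw [sum_comm]
  refine sum_congr rfl fun b _ => ?_
  rw [sum_comm]
  refine sum_congr rfl fun c _ => sum_congr rfl fun τ _ => ?_
  ring

variable {Ω : Type*} [Fintype Ω]

/-- One rotated factor gives the mean, in unnormalized form. -/
lemma replica_one (X W : Ω → ℝ) :
    ∑ τ : Fin 4 → Ω, (∑ a, rot 0 a * X (τ a)) * ∏ a, W (τ a) =
      4 * (∑ σ, W σ) ^ 3 * ∑ σ, X σ * W σ := by
  -- The unused factors of `replica_sum` are filled by the constant `1` on the first replica.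
  have h := replica_sum (rot 0) ![1, 0, 0, 0] ![1, 0, 0, 0] X 1 1 W
  simp only [Fin.sum_univ_four, Fin.prod_univ_four] at h
  simp [rot] at h
  simp only [Fin.sum_univ_four, Fin.prod_univ_four]
  simp [rot]
  rw [h]
  ring

/-- Two rotated factors give the covariance, in unnormalized form. -/
lemma replica_two (X Y W : Ω → ℝ) :
    ∑ τ : Fin 4 → Ω, (∑ a, rot 1 a * X (τ a)) * (∑ a, rot 1 a * Y (τ a)) * ∏ a, W (τ a) =
      4 * (∑ σ, W σ) ^ 2 * ((∑ σ, W σ) * (∑ σ, X σ * Y σ * W σ) -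
        (∑ σ, X σ * W σ) * (∑ σ, Y σ * W σ)) := by
  have h := replica_sum (rot 1) (rot 1) ![1, 0, 0, 0] X Y 1 W
  simp only [Fin.sum_univ_four, Fin.prod_univ_four] at h
  simp [rot] at h
  simp only [Fin.sum_univ_four, Fin.prod_univ_four]
  simp [rot]
  rw [h]
  ring

/-- Three different rotated factors give minus the third joint cumulant, in unnormalized form. -/
lemma replica_three (X Y V W : Ω → ℝ) :
    ∑ τ : Fin 4 → Ω, (∑ a, rot 1 a * X (τ a)) * (∑ a, rot 2 a * Y (τ a)) *
        (∑ a, rot 3 a * V (τ a)) * ∏ a, W (τ a) =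
      -4 * (∑ σ, W σ) * ((∑ σ, W σ) ^ 2 * (∑ σ, X σ * Y σ * V σ * W σ)
        - (∑ σ, W σ) * ((∑ σ, X σ * W σ) * (∑ σ, Y σ * V σ * W σ)
          + (∑ σ, Y σ * W σ) * (∑ σ, X σ * V σ * W σ)
          + (∑ σ, V σ * W σ) * (∑ σ, X σ * Y σ * W σ))
        + 2 * (∑ σ, X σ * W σ) * (∑ σ, Y σ * W σ) * (∑ σ, V σ * W σ)) := by
  have h := replica_sum (rot 1) (rot 2) (rot 3) X Y V W
  simp only [Fin.sum_univ_four, Fin.prod_univ_four] at h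
  simp [rot] at h
  simp only [Fin.sum_univ_four, Fin.prod_univ_four]
  simp [rot]
  rw [h]
  ring

end Replica

/-! ### Gibbs expectations -/

noncomputable section Gibbs

/-- Expectation of `X` under the probability weights proportional to `exp E`; note that `E` is
minus the Hamiltonian. -/
def gibbs {Ω : Type*} [Fintype Ω] (E X : Ω → ℝ) : ℝ :=
  (∑ σ, X σ * Real.exp (E σ)) / ∑ σ, Real.exp (E σ)

section General
variable {Ω : Type*} [Fintype Ω]

lemma gibbs_add (E X Y : Ω → ℝ) : gibbs E (X + Y) = gibbs E X + gibbs E Y := by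
  simp [gibbs, add_mul, sum_add_distrib, add_div]

lemma gibbs_smul (E X : Ω → ℝ) (c : ℝ) : gibbs E (c • X) = c * gibbs E X := by
  simp only [gibbs, Pi.smul_apply, smul_eq_mul, mul_assoc, ← mul_sum, mul_div_assoc]

lemma gibbs_sub (E X Y : Ω → ℝ) : gibbs E (X - Y) = gibbs E X - gibbs E Y := by
  simp [gibbs, sub_mul, sum_sub_distrib, sub_div]

variable [Nonempty Ω]

lemma partition_pos_s10 (E : Ω → ℝ) : 0 < ∑ σ, Real.exp (E σ) :=
  sum_pos (fun _ _ => Real.exp_pos _) univ_nonempty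

lemma gibbs_le_one {E X : Ω → ℝ} (hX : ∀ σ, X σ ≤ 1) : gibbs E X ≤ 1 := by
  rw [gibbs, div_le_one (partition_pos_s10 E)]
  exact sum_le_sum fun σ _ => mul_le_of_le_one_left (Real.exp_pos _).le (hX σ)

lemma hasDerivAt_gibbs {E : ℝ → Ω → ℝ} {D : Ω → ℝ} {t : ℝ}
    (hE : ∀ σ, HasDerivAt (fun r => E r σ) (D σ) t) (X : Ω → ℝ) :
    HasDerivAt (fun r => gibbs (E r) X)
      (gibbs (E t) (X * D) - gibbs (E t) X * gibbs (E t) D) t := by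
  have h1 : HasDerivAt (fun r => ∑ σ, X σ * Real.exp (E r σ))
      (∑ σ, X σ * (Real.exp (E t σ) * D σ)) t :=
    HasDerivAt.fun_sum fun σ _ => ((hE σ).exp).const_mul (X σ)
  have h2 : HasDerivAt (fun r => ∑ σ, Real.exp (E r σ))
      (∑ σ, Real.exp (E t σ) * D σ) t :=
    HasDerivAt.fun_sum fun σ _ => (hE σ).exp
  have hZ := (partition_pos_s10 (E t)).ne'
  refine (h1.fun_div h2 hZ).congr_deriv ?_
  have e1 : ∑ σ, X σ * (Real.exp (E t σ) * D σ) = ∑ σ, (X * D) σ * Real.exp (E t σ) :=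
    sum_congr rfl fun σ _ => by simp only [Pi.mul_apply]; ring
  have e2 : ∑ σ, Real.exp (E t σ) * D σ = ∑ σ, D σ * Real.exp (E t σ) :=
    sum_congr rfl fun σ _ => mul_comm _ _
  rw [e1, e2]
  simp only [gibbs]
  field_simp

end General

/-! ### Griffiths and Griffiths-Hurst-Sherman inequalities -/

section Ising
variable {ι : Type*} [Fintype ι]

/-- The linear observable `∑ i, xᵢ σᵢ`. -/
def lin (x : ι → ℝ) (σ : ι → Bool) : ℝ := ∑ i, x i * sp (σ i)

/-- Minus the Ising Hamiltonian with couplings `K` (summed over all ordered pairs) and fields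
`g`. -/
def ising (K : ι → ι → ℝ) (g : ι → ℝ) (σ : ι → Bool) : ℝ :=
  ∑ i, ∑ j, K i j * (sp (σ i) * sp (σ j)) + lin g σ

lemma lin_sub (x y : ι → ℝ) : lin (x - y) = lin x - lin y := by
  ext σ; simp [lin, sub_mul, sum_sub_distrib]

lemma lin_smul (c : ℝ) (x : ι → ℝ) : lin (c • x) = c • lin x := by
  ext σ; simp [lin, mul_sum, mul_assoc]

lemma sum_rot_lin (x : ι → ℝ) (u : Fin 4) (τ : Fin 4 → ι → Bool) :
    ∑ a, rot u a * lin x (τ a) = ∑ i, x i * rotSpin u (fun a => τ a i) := by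
  simp only [lin, rotSpin, mul_sum]
  rw [sum_comm]
  exact sum_congr rfl fun i _ => sum_congr rfl fun a _ => by ring

lemma lin_mem_cone {x : ι → ℝ} (hx : ∀ i, 0 ≤ x i) (u : Fin 4) :
    (fun τ : ι → Fin 4 → Bool => ∑ i, x i * rotSpin u (τ i)) ∈ cone ι := by
  have : (fun τ : ι → Fin 4 → Bool => ∑ i, x i * rotSpin u (τ i)) =
      ∑ i, (fun _ => x i) * (fun τ => rotSpin u (τ i)) := by ext τ; simp
  rw [this]
  exact sum_mem fun i _ => mul_mem (const_mem_cone (hx i)) (rotSpin_mem_cone i u)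

/-- The total energy of four replicas is a polynomial with nonnegative coefficients in the rotated
spins, since the rotation preserves inner products up to a factor and turns the sum over replicas
into the rotated spin of index `0`. -/
lemma sum_ising (K : ι → ι → ℝ) (g : ι → ℝ) (τ : Fin 4 → ι → Bool) :
    ∑ a, ising K g (τ a) =
      ∑ i, ∑ j, K i j / 4 * ∑ u, rotSpin u (fun a => τ a i) * rotSpin u (fun a => τ a j)
        + ∑ i, g i * rotSpin 0 (fun a => τ a i) := by
  rw [← sum_rot_lin]
  simp only [ising, sum_add_distrib, sum_rotSpin_mul]
  congr 1
  · rw [sum_comm]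
    refine sum_congr rfl fun i _ => ?_
    rw [sum_comm]
    refine sum_congr rfl fun j _ => ?_
    rw [← mul_sum]; ring
  · simp [rot, Fin.sum_univ_four]

variable [DecidableEq ι]

/-- The positivity statement from which all correlation inequalities are derived. -/
lemma replica_nonneg {K : ι → ι → ℝ} {g : ι → ℝ} (hK : ∀ i j, 0 ≤ K i j) (hg : ∀ i, 0 ≤ g i)
    {f : (ι → Fin 4 → Bool) → ℝ} (hf : f ∈ cone ι) :
    0 ≤ ∑ τ : Fin 4 → ι → Bool, f (fun i a => τ a i) * ∏ a, Real.exp (ising K g (τ a)) := by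
  have hE : (fun τ : ι → Fin 4 → Bool =>
      ∑ i, ∑ j, K i j / 4 * ∑ u, rotSpin u (τ i) * rotSpin u (τ j)
        + ∑ i, g i * rotSpin 0 (τ i)) ∈ cone ι := by
    have : (fun τ : ι → Fin 4 → Bool =>
      ∑ i, ∑ j, K i j / 4 * ∑ u, rotSpin u (τ i) * rotSpin u (τ j)
        + ∑ i, g i * rotSpin 0 (τ i)) =
      ∑ i, ∑ j, (fun _ => K i j / 4) *
          ∑ u, (fun τ => rotSpin u (τ i)) * (fun τ => rotSpin u (τ j))
        + (fun τ => ∑ i, g i * rotSpin 0 (τ i)) := by ext τ; simp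
    rw [this]
    exact add_mem (sum_mem fun i _ => sum_mem fun j _ =>
      mul_mem (const_mem_cone (div_nonneg (hK i j) (by norm_num))) (sum_mem fun u _ =>
        mul_mem (rotSpin_mem_cone i u) (rotSpin_mem_cone j u))) (lin_mem_cone hg 0)
  have := sum_cone_exp_nonneg hf hE
  rw [← (Equiv.piComm (fun (_ : Fin 4) (_ : ι) => Bool)).sum_comp] at this
  simp_rw [← Real.exp_sum, sum_ising]
  exact this

variable {K : ι → ι → ℝ} {g x y z : ι → ℝ}

/-- First Griffiths inequality for linear observables. -/
lemma gibbs_lin_nonneg (hK : ∀ i j, 0 ≤ K i j) (hg : ∀ i, 0 ≤ g i) (hx : ∀ i, 0 ≤ x i) :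
    0 ≤ gibbs (ising K g) (lin x) := by
  have h := replica_nonneg hK hg (lin_mem_cone hx 0)
  simp_rw [← sum_rot_lin] at h
  rw [replica_one (lin x) (fun σ => Real.exp (ising K g σ))] at h
  have hZ := partition_pos_s10 (ising K g)
  exact div_nonneg (nonneg_of_mul_nonneg_right h (by positivity)) hZ.le

/-- Second Griffiths inequality for linear observables. -/
lemma gibbs_cov_nonneg (hK : ∀ i j, 0 ≤ K i j) (hg : ∀ i, 0 ≤ g i) (hx : ∀ i, 0 ≤ x i)
    (hy : ∀ i, 0 ≤ y i) :
    0 ≤ gibbs (ising K g) (lin x * lin y) -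
      gibbs (ising K g) (lin x) * gibbs (ising K g) (lin y) := by
  have h := replica_nonneg hK hg (mul_mem (lin_mem_cone hx 1) (lin_mem_cone hy 1))
  simp only [Pi.mul_apply, ← sum_rot_lin] at h
  rw [replica_two (lin x) (lin y) (fun σ => Real.exp (ising K g σ))] at h
  have hZ := partition_pos_s10 (ising K g)
  have h2 := div_nonneg (nonneg_of_mul_nonneg_right h (by positivity)) (pow_pos hZ 2).le
  refine h2.trans_eq ?_
  simp only [gibbs, Pi.mul_apply]
  field_simp

/-- Griffiths-Hurst-Sherman inequality for linear observables. -/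
lemma gibbs_cumulant_nonpos (hK : ∀ i j, 0 ≤ K i j) (hg : ∀ i, 0 ≤ g i) (hx : ∀ i, 0 ≤ x i)
    (hy : ∀ i, 0 ≤ y i) (hz : ∀ i, 0 ≤ z i) :
    gibbs (ising K g) (lin x * lin y * lin z)
      - gibbs (ising K g) (lin x) * gibbs (ising K g) (lin y * lin z)
      - gibbs (ising K g) (lin y) * gibbs (ising K g) (lin x * lin z)
      - gibbs (ising K g) (lin z) * gibbs (ising K g) (lin x * lin y)
      + 2 * gibbs (ising K g) (lin x) * gibbs (ising K g) (lin y) * gibbs (ising K g) (lin z)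
      ≤ 0 := by
  have h := replica_nonneg hK hg
    (mul_mem (mul_mem (lin_mem_cone hx 1) (lin_mem_cone hy 2)) (lin_mem_cone hz 3))
  simp only [Pi.mul_apply, ← sum_rot_lin] at h
  rw [replica_three (lin x) (lin y) (lin z) (fun σ => Real.exp (ising K g σ))] at h
  have hZ := partition_pos_s10 (ising K g)
  have h2 := div_nonneg h (mul_pos four_pos (pow_pos hZ 4)).le
  rw [← neg_nonneg]
  refine h2.trans_eq ?_
  simp only [gibbs, Pi.mul_apply]
  field_simp
  ring

/-- The expectation of `lin x` in the field `r g` is concave in `r ∈ [0, 1]` and nonnegative at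
`r = 0`, so its slope at `1` is at most its value there. -/
lemma gibbs_cov_field_le (hK : ∀ i j, 0 ≤ K i j) (hg : ∀ i, 0 ≤ g i) (hx : ∀ i, 0 ≤ x i) :
    gibbs (ising K g) (lin x * lin g) -
      gibbs (ising K g) (lin x) * gibbs (ising K g) (lin g) ≤ gibbs (ising K g) (lin x) := by
  have hE : ∀ s : ℝ, ∀ σ, HasDerivAt (fun r : ℝ => ising K (r • g) σ) (lin g σ) s := by
    intro s σ
    have : (fun r : ℝ => ising K (r • g) σ) =
        fun r => ∑ i, ∑ j, K i j * (sp (σ i) * sp (σ j)) + r * lin g σ := by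
      ext r; simp [ising, lin, mul_sum, mul_assoc]
    rw [this]
    have hlin : HasDerivAt (fun r => r * lin g σ) (lin g σ) s := by
      simpa using (hasDerivAt_id s).mul_const (lin g σ)
    exact hlin.const_add _
  have hsg : ∀ s ∈ Set.Icc (0 : ℝ) 1, ∀ i, 0 ≤ (s • g) i :=
    fun s hs i => mul_nonneg hs.1 (hg i)
  set φ' : ℝ → ℝ := fun s => gibbs (ising K (s • g)) (lin x * lin g) -
      gibbs (ising K (s • g)) (lin x) * gibbs (ising K (s • g)) (lin g) with hφ'
  have h1 : ∀ s, HasDerivAt (fun r : ℝ => gibbs (ising K (r • g)) (lin x)) (φ' s) s :=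
    fun s => hasDerivAt_gibbs (hE s) (lin x)
  have h2 : ∀ s, HasDerivAt φ' _ s := fun s =>
    (hasDerivAt_gibbs (hE s) (lin x * lin g)).sub
      ((hasDerivAt_gibbs (hE s) (lin x)).mul (hasDerivAt_gibbs (hE s) (lin g)))
  have hanti : AntitoneOn φ' (Set.Icc 0 1) := by
    refine antitoneOn_of_deriv_nonpos (convex_Icc 0 1)
      (fun s _ => (h2 s).continuousAt.continuousWithinAt)
      (fun s _ => (h2 s).differentiableAt.differentiableWithinAt) fun s hs => ?_
    rw [(h2 s).deriv]
    have := gibbs_cumulant_nonpos hK (hsg s (interior_subset hs)) hx hg hg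
    linarith
  obtain ⟨ξ, hξ, hξe⟩ := exists_hasDerivAt_eq_slope
    (fun r : ℝ => gibbs (ising K (r • g)) (lin x)) φ' zero_lt_one
    (fun s _ => (h1 s).continuousAt.continuousWithinAt) (fun s _ => h1 s)
  have h3 := hanti ⟨hξ.1.le, hξ.2.le⟩ ⟨zero_le_one, le_rfl⟩ hξ.2.le
  have h4 := gibbs_lin_nonneg hK (hsg 0 ⟨le_rfl, zero_le_one⟩) hx
  simp only [hφ', one_smul, sub_zero, div_one] at h3 hξe h4
  linarith

/-! ### Evolution along the curve -/

variable {o : ι}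

/-- A spin that is coupled to nothing but its own field `v` has expectation `tanh v`. -/
lemma gibbs_eq_tanh {E R : (ι → Bool) → ℝ} {v : ℝ} (hE : ∀ σ, E σ = v * sp (σ o) + R σ)
    (hR : ∀ σ, R (Function.update σ o (!σ o)) = R σ) :
    gibbs E (fun σ => sp (σ o)) = Real.tanh v := by
  have hinv : Function.Involutive (fun σ : ι → Bool => Function.update σ o (!σ o)) := by
    intro σ; simp
  -- Reversing the distinguished spin changes the sign of each term.
  have hflip : ∑ σ : ι → Bool, sp (σ o) * Real.exp (R σ) = 0 := by
    have h1 := Equiv.sum_comp (hinv.toPerm _) (fun σ : ι → Bool => sp (σ o) * Real.exp (R σ))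
    have h2 : ∀ σ : ι → Bool, sp ((hinv.toPerm _ σ) o) * Real.exp (R (hinv.toPerm _ σ)) =
        -(sp (σ o) * Real.exp (R σ)) := by
      intro σ
      simp only [Function.Involutive.coe_toPerm, hR, Function.update_self]
      cases σ o <;> simp [sp]
    simp_rw [h2, sum_neg_distrib] at h1
    linarith
  have hpt : ∀ σ : ι → Bool, sp (σ o) * Real.exp (R σ) =
      sp (σ o) * Real.exp (E σ) * Real.cosh v - Real.sinh v * Real.exp (E σ) := by
    intro σ
    have hv : Real.exp v * Real.exp (-v) = 1 := by rw [← Real.exp_add]; simp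
    rw [hE, Real.exp_add, Real.cosh_eq, Real.sinh_eq]
    cases σ o
    · simp only [sp, Bool.false_eq_true, if_false, mul_neg, mul_one]
      linear_combination (-Real.exp (R σ)) * hv.symm
    · simp only [sp, if_true, mul_one]
      linear_combination (Real.exp (R σ)) * hv.symm
  simp_rw [hpt, sum_sub_distrib, ← sum_mul, ← mul_sum] at hflip
  rw [gibbs, Real.tanh_eq_sinh_div_cosh,
    div_eq_div_iff (partition_pos_s10 E).ne' (Real.cosh_pos v).ne']
  linarith

lemma lin_single (o : ι) : lin (Pi.single o 1) = fun σ => sp (σ o) := by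
  ext σ; simp [lin, Pi.single_apply]

lemma lin_update (h : ι → ℝ) (r : ℝ) (σ : ι → Bool) :
    lin (Function.update h o r) σ = r * sp (σ o) + lin (Function.update h o 0) σ := by
  simp only [lin]
  rw [← add_sum_erase _ _ (mem_univ o), ← add_sum_erase univ (fun i => Function.update h o 0 i * _)
    (mem_univ o)]
  simp only [Function.update_self, zero_mul, zero_add]
  congr 1
  refine sum_congr rfl fun i hi => ?_
  rw [Function.update_of_ne (ne_of_mem_erase hi), Function.update_of_ne (ne_of_mem_erase hi)]

/-- The observable `(A / c) lin g - lin a` has nonnegative coefficients, so the second Griffiths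
inequality compares the covariance with `lin a` to the one with `lin g`. -/
lemma gibbs_cov_le {a : ι → ℝ} {A c : ℝ} (hK : ∀ i j, 0 ≤ K i j) (hc : 0 < c)
    (hg : ∀ i, c ≤ g i) (hA : 0 ≤ A) (ha : ∀ i, a i ≤ A) :
    gibbs (ising K g) ((fun σ => sp (σ o)) * lin a) -
      gibbs (ising K g) (fun σ => sp (σ o)) * gibbs (ising K g) (lin a) ≤ A / c := by
  have hg0 : ∀ i, 0 ≤ g i := fun i => hc.le.trans (hg i)
  have hs : ∀ i, 0 ≤ (Pi.single o 1 : ι → ℝ) i := fun i => by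
    rw [Pi.single_apply]; split_ifs <;> norm_num
  have hAc : 0 ≤ A / c := by positivity
  have hd : ∀ i, 0 ≤ ((A / c) • g - a) i := fun i => by
    have : A / c * c ≤ A / c * g i := mul_le_mul_of_nonneg_left (hg i) hAc
    rw [div_mul_cancel₀ _ hc.ne'] at this
    have := ha i
    simp only [Pi.sub_apply, Pi.smul_apply, smul_eq_mul]
    linarith
  have h1 := gibbs_cov_nonneg hK hg0 hs hd
  have h2 := gibbs_cov_field_le hK hg0 hs
  have h3 : gibbs (ising K g) (lin (Pi.single o 1)) ≤ 1 :=
    gibbs_le_one fun σ => by rw [lin_single]; exact sp_le_one _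
  rw [lin_single] at h1 h2 h3
  rw [lin_sub, lin_smul, mul_sub, mul_smul_comm, gibbs_sub, gibbs_sub, gibbs_smul, gibbs_smul]
    at h1
  have h4 := mul_le_mul_of_nonneg_left (h2.trans h3) hAc
  linarith

/-- The couplings `K` together with couplings `t a j` between the distinguished site `o` and each
site `j`; each of these pairs is counted once, as the ordered pair `(o, j)`. -/
def rowCoupling (K : ι → ι → ℝ) (o : ι) (a : ι → ℝ) (t : ℝ) (i j : ι) : ℝ :=
  (if i = o then t * a j else 0) + K i j

lemma ising_rowCoupling (a h : ι → ℝ) (t r : ℝ) (σ : ι → Bool) :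
    ising (rowCoupling K o a t) (Function.update h o r) σ =
      t * (sp (σ o) * lin a σ) + r * sp (σ o) + ising K (Function.update h o 0) σ := by
  simp only [ising, rowCoupling, lin_update h r, add_mul, sum_add_distrib, ite_mul, zero_mul]
  rw [sum_comm]
  simp only [sum_ite_eq', mem_univ, if_true]
  have : ∑ j, t * a j * (sp (σ o) * sp (σ j)) = t * (sp (σ o) * lin a σ) := by
    simp only [lin, mul_sum]
    exact sum_congr rfl fun j _ => by ring
  rw [this]
  ring

/-- The magnetization at the end of the curve differs from `tanh (v 0)` by at most the sup of its
derivative along the curve. -/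
lemma magnetization_curve_bound {a h : ι → ℝ} {A c : ℝ} {v : ℝ → ℝ}
    (hK : ∀ i j, 0 ≤ K i j) (hKl : ∀ j, K o j = 0) (hKr : ∀ i, K i o = 0)
    (ha0 : ∀ i, 0 ≤ a i) (ha : ∀ i, a i ≤ A) (hc : 0 < c) (hh : ∀ i, c ≤ h i)
    (hv1 : v 1 = h o)
    (hv : ∀ t ∈ Set.Icc (0 : ℝ) 1, HasDerivAt v
      (-gibbs (ising (rowCoupling K o a t) (Function.update h o (v t))) (lin a)) t) :
    |gibbs (ising (rowCoupling K o a 1) h) (fun σ => sp (σ o)) - Real.tanh (v 0)| ≤ A / c := by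
  have hA : 0 ≤ A := (ha0 o).trans (ha o)
  have hKt : ∀ t ∈ Set.Icc (0 : ℝ) 1, ∀ i j, 0 ≤ rowCoupling K o a t i j := by
    intro t ht i j
    unfold rowCoupling
    have := mul_nonneg ht.1 (ha0 j)
    split_ifs <;> linarith [hK i j]
  have hup : ∀ r b : ℝ, b ≤ c → b ≤ r → ∀ i, b ≤ Function.update h o r i := by
    intro r b hbc hbr i
    rcases eq_or_ne i o with rfl | hi
    · simpa using hbr
    · rw [Function.update_of_ne hi]; exact hbc.trans (hh i)
  have hslope : ∀ t ∈ Set.Icc (0 : ℝ) 1, 0 ≤ v t →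
      -gibbs (ising (rowCoupling K o a t) (Function.update h o (v t))) (lin a) ≤ 0 :=
    fun t ht h0 => neg_nonpos.2 (gibbs_lin_nonneg (hKt t ht) (hup _ _ hc.le h0) ha0)
  have hho : 0 < h o := hc.trans_le (hh o)
  have hrev : ∀ s ∈ Set.Icc (0 : ℝ) 1, 1 - s ∈ Set.Icc (0 : ℝ) 1 :=
    fun s hs => ⟨by linarith [hs.2], by linarith [hs.1]⟩
  have hvpos : ∀ t ∈ Set.Icc (0 : ℝ) 1, 0 ≤ v t := by
    -- In reversed time, compare `-v` with the line `s ↦ h o * s - h o`, of slope `h o > 0`; it is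
    -- negative for `s < 1`, so at a contact point `v` is positive and `-v` does not increase.
    have hf : ∀ s ∈ Set.Icc (0 : ℝ) 1, HasDerivAt (fun s => -v (1 - s))
        (-gibbs (ising (rowCoupling K o a (1 - s)) (Function.update h o (v (1 - s)))) (lin a))
        s := by
      intro s hs
      have := ((hv _ (hrev s hs)).comp s ((hasDerivAt_id s).const_sub 1)).fun_neg
      simpa [Function.comp_def] using this
    have hB : ∀ s : ℝ, HasDerivAt (fun s => h o * s - h o) (h o) s := by
      intro s
      simpa using ((hasDerivAt_id s).const_mul (h o)).sub_const (h o)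
    have := image_le_of_deriv_right_lt_deriv_boundary
      (f := fun s => -v (1 - s)) (a := 0) (b := 1)
      (fun s hs => (hf s hs).continuousAt.continuousWithinAt)
      (fun s hs => (hf s ⟨hs.1, hs.2.le⟩).hasDerivWithinAt)
      (B := fun s => h o * s - h o) (by simp [hv1]) hB
      (fun s hs heq => by
        have hs' : s ∈ Set.Icc (0 : ℝ) 1 := ⟨hs.1, hs.2.le⟩
        have : h o * s ≤ h o * 1 := mul_le_mul_of_nonneg_left hs.2.le hho.le
        exact (hslope _ (hrev s hs') (by linarith)).trans_lt hho)
    intro t ht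
    have h1 := this (hrev t ht)
    simp only [sub_sub_cancel] at h1
    have : 0 ≤ h o * t := mul_nonneg hho.le ht.1
    linarith
  have hanti : AntitoneOn v (Set.Icc 0 1) := by
    refine antitoneOn_of_deriv_nonpos (convex_Icc 0 1)
      (fun s hs => (hv s hs).continuousAt.continuousWithinAt)
      (fun s hs => (hv s (interior_subset hs)).differentiableAt.differentiableWithinAt)
      fun s hs => ?_
    have hs' := interior_subset hs
    rw [(hv s hs').deriv]
    exact hslope s hs' (hvpos s hs')
  have hvc : ∀ t ∈ Set.Icc (0 : ℝ) 1, c ≤ v t := fun t ht =>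
    ((hh o).trans_eq hv1.symm).trans (hanti ht ⟨zero_le_one, le_rfl⟩ ht.2)
  set E : ℝ → (ι → Bool) → ℝ := fun t =>
    ising (rowCoupling K o a t) (Function.update h o (v t)) with hE
  set s : (ι → Bool) → ℝ := fun σ => sp (σ o) with hs
  have hF : ∀ t ∈ Set.Icc (0 : ℝ) 1, HasDerivAt (fun t => gibbs (E t) s)
      (-gibbs (E t) s * (gibbs (E t) (s * lin a) - gibbs (E t) s * gibbs (E t) (lin a))) t := by
    intro t ht
    have hEt : ∀ σ, HasDerivAt (fun r => E r σ)
        ((s * lin a + (-gibbs (E t) (lin a)) • s) σ) t := by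
      intro σ
      simp only [hE, ising_rowCoupling]
      have h1 : HasDerivAt (fun r : ℝ => r * (sp (σ o) * lin a σ)) (sp (σ o) * lin a σ) t := by
        simpa using (hasDerivAt_id t).mul_const (sp (σ o) * lin a σ)
      exact (h1.add ((hv t ht).mul_const (sp (σ o)))).add_const _
    refine (hasDerivAt_gibbs hEt s).congr_deriv ?_
    have hss : s * s = 1 := by ext σ; exact sp_sq _
    have hone : gibbs (E t) 1 = 1 := by
      simp [gibbs, div_self (partition_pos_s10 (E t)).ne']
    rw [mul_add, ← mul_assoc, hss, one_mul, mul_smul_comm, hss, gibbs_add, gibbs_add, gibbs_smul,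
      gibbs_smul, hone]
    ring
  have hsin : ∀ i, 0 ≤ (Pi.single o 1 : ι → ℝ) i := fun i => by
    rw [Pi.single_apply]; split_ifs <;> norm_num
  have hbound : ∀ t ∈ Set.Icc (0 : ℝ) 1,
      ‖-gibbs (E t) s * (gibbs (E t) (s * lin a) - gibbs (E t) s * gibbs (E t) (lin a))‖
        ≤ A / c := by
    intro t ht
    have hg0 := hup (v t) 0 hc.le (hvpos t ht)
    have h1 := gibbs_cov_nonneg (hKt t ht) hg0 hsin ha0
    have h2 := gibbs_lin_nonneg (hKt t ht) hg0 hsin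
    rw [lin_single] at h1 h2
    have h3 : gibbs (E t) s ≤ 1 := gibbs_le_one fun σ => sp_le_one _
    have h4 := gibbs_cov_le (o := o) (hKt t ht) hc (hup (v t) c le_rfl (hvc t ht)) hA ha
    rw [norm_mul, norm_neg, Real.norm_of_nonneg h2, Real.norm_of_nonneg h1]
    exact (mul_le_of_le_one_left h1 h3).trans h4
  have hmvt := (convex_Icc (0 : ℝ) 1).norm_image_sub_le_of_norm_hasDerivWithin_le
    (fun t ht => (hF t ht).hasDerivWithinAt) hbound
    (Set.left_mem_Icc.2 zero_le_one) (Set.right_mem_Icc.2 zero_le_one)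
  have hE1 : E 1 = ising (rowCoupling K o a 1) h := by simp [hE, hv1]
  have hE0 : gibbs (E 0) s = Real.tanh (v 0) := by
    refine gibbs_eq_tanh (R := ising K (Function.update h o 0))
      (fun σ => by simp [hE, ising_rowCoupling]) fun σ => ?_
    simp only [ising, lin]
    congr 1
    · refine sum_congr rfl fun i _ => sum_congr rfl fun j _ => ?_
      rcases eq_or_ne i o with rfl | hi
      · simp [hKl]
      rcases eq_or_ne j o with rfl | hj
      · simp [hKr]
      rw [Function.update_of_ne hi, Function.update_of_ne hj]
    · refine sum_congr rfl fun i _ => ?_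
      rcases eq_or_ne i o with rfl | hi
      · simp
      rw [Function.update_of_ne hi, Function.update_of_ne hi]
  rw [hE1, hE0] at hmvt
  simpa using hmvt

end Ising
end Gibbs



/-- **Bound (2.4).** Along the approximate characteristic curve,
`|m_1(1,h) - tanh(w_1(0))| ≤ 3‖J_1‖_∞/ĥ`. -/
theorem magnetization_endpoint_bound
    (N : ℕ) [NeZero N]
    (J : Matrix (Fin N) (Fin N) ℝ)
    (hJsym : ∀ i j, J i j = J j i)
    (hJnonneg : ∀ i j, 0 ≤ J i j)
    (h : Fin N → ℝ) (hh : ∀ i, 0 ≤ h i)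
    (hhat : ℝ) (hhat_def : hhat = ⨅ i, h i) (hhat_pos : 0 < hhat)
    (spin : Bool → ℝ) (hspin : spin = fun b => if b then 1 else -1)
    (H : ℝ → (Fin N → ℝ) → (Fin N → Bool) → ℝ)
    (hH : ∀ t g σ, H t g σ =
      -t * spin (σ 0) * (∑ i, J 0 i * spin (σ i))
      - (1/2) * (∑ i ∈ Finset.univ.filter (fun i => i ≠ (0 : Fin N)),
          ∑ j ∈ Finset.univ.filter (fun j => j ≠ (0 : Fin N)),
            J i j * spin (σ i) * spin (σ j))
      - ∑ i, g i * spin (σ i))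
    (m : ℝ → (Fin N → ℝ) → Fin N → ℝ)
    (hm : ∀ t g k, m t g k =
      (∑ σ : Fin N → Bool, spin (σ k) * Real.exp (-H t g σ)) /
      (∑ σ : Fin N → Bool, Real.exp (-H t g σ)))
    (w : ℝ → Fin N → ℝ)
    (hw1 : w 1 = h)
    (hwfix : ∀ t ∈ Set.Icc (0:ℝ) 1, ∀ i, i ≠ 0 → w t i = h i)
    (hwode : ∀ t ∈ Set.Icc (0:ℝ) 1,
      HasDerivAt (fun r => w r 0) (-(∑ i, J 0 i * m t (w t) i)) t) :
    |m 1 h 0 - Real.tanh (w 0 0)| ≤ 3 * (⨆ i, J 0 i) / hhat := by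
  have hsp : spin = sp := by rw [hspin]; rfl
  subst hsp
  have hA : ∀ i, J 0 i ≤ ⨆ i, J 0 i := fun i => le_ciSup (Set.finite_range _).bddAbove i
  have hc : ∀ i, hhat ≤ h i := fun i =>
    hhat_def ▸ ciInf_le (Set.finite_range _).bddBelow i
  set K : Fin N → Fin N → ℝ := fun i j => if i ≠ 0 then (if j ≠ 0 then J i j / 2 else 0) else 0
    with hKdef
  have hK : ∀ i j, 0 ≤ K i j := by
    intro i j
    simp only [hKdef]
    split_ifs <;> first | exact le_rfl | exact div_nonneg (hJnonneg i j) zero_le_two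
  have hHE : ∀ t g, (fun σ => -H t g σ) = ising (rowCoupling K 0 (J 0) t) g := by
    intro t g
    ext σ
    have h1 := ising_rowCoupling (K := K) (o := 0) (J 0) g t (g 0) σ
    rw [Function.update_eq_self] at h1
    have h2 := lin_update (o := 0) g (g 0) σ
    rw [Function.update_eq_self] at h2
    have h3 : ∑ i, ∑ j, K i j * (sp (σ i) * sp (σ j)) =
        1 / 2 * ∑ i ∈ Finset.univ.filter (fun i => i ≠ (0 : Fin N)),
          ∑ j ∈ Finset.univ.filter (fun j => j ≠ (0 : Fin N)), J i j * sp (σ i) * sp (σ j) := by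
      simp only [sum_filter, mul_sum]
      refine sum_congr rfl fun i _ => ?_
      by_cases hi : i = 0
      · simp [hKdef, hi]
      · simp only [hKdef, hi, ne_eq, not_false_eq_true, if_true, mul_sum]
        refine sum_congr rfl fun j _ => ?_
        split_ifs <;> ring
    rw [h1, hH]
    simp only [ising, h3]
    simp only [lin] at h2 ⊢
    linarith
  have hmg : ∀ t g k, m t g k = gibbs (ising (rowCoupling K 0 (J 0) t) g) (fun σ => sp (σ k)) := by
    intro t g k
    rw [hm, ← hHE, gibbs]
  have hwt : ∀ t ∈ Set.Icc (0 : ℝ) 1, w t = Function.update h 0 (w t 0) := by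
    intro t ht
    ext i
    rcases eq_or_ne i 0 with rfl | hi
    · simp
    · rw [Function.update_of_ne hi, hwfix t ht i hi]
  have hsum : ∀ (E : (Fin N → Bool) → ℝ),
      ∑ i, J 0 i * gibbs E (fun σ => sp (σ i)) = gibbs E (lin (J 0)) := by
    intro E
    simp only [gibbs, lin, ← mul_div_assoc, ← sum_div, mul_sum, sum_mul]
    rw [sum_comm]
    simp only [mul_assoc]
  have hmain := magnetization_curve_bound (o := (0 : Fin N)) (v := fun t => w t 0) hK
    (fun j => by simp [hKdef]) (fun i => by simp [hKdef]) (hJnonneg 0) hA hhat_pos hc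
    (by simp [hw1]) (fun t ht => by
      have := hwode t ht
      simp only [hmg] at this
      rw [hsum] at this
      rwa [← hwt t ht])
  rw [hmg]
  refine hmain.trans ?_
  have : 0 ≤ ⨆ i, J 0 i := (hJnonneg 0 0).trans (hA 0)
  gcongr
  linarith
end
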